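/- arXiv:1102.1491 — 12 statements merged into one kernel-verified Lean document; each statement's English description precedes it below -/
import Mathlib

section
/- Construction I. Let D be the directed graph on the vertex set V = {(g, B) : g ∈ P, B ∈ 𝓑_g}, with adjacency (g, B) → (g′, B′) if and only if g ∈ B′. Then D is a directed strongly regular graph with parameters (v, k, t, λ, μ) = (rq²b, rq(q−1), r(q−1)a + a, q(a−1) + (r−1)(q−1)a, r(q−1)a + a). -/
/-- A loopless directed graph (given by its adjacency relation `Adj` on the vertex
type `V`) is a *directed strongly regular graph* with parameters `(v, k, t, lam, mu)`:
the vertex set is finite of size `v`; every vertex has exactly `k` out-neighbors and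
exactly `k` in-neighbors; every vertex has exactly `t` out-neighbors that are also
in-neighbors; and for distinct vertices `x, y`, the number of directed paths of
length two from `x` to `y` is `lam` if `x → y` and `mu` otherwise. -/
def IsDSRG {V : Type} (Adj : V → V → Prop) (v k t lam mu : ℕ) : Prop :=
  Finite V ∧
  (∀ x : V, ¬ Adj x x) ∧
  Nat.card V = v ∧
  (∀ x : V, Nat.card {y : V // Adj x y} = k) ∧
  (∀ x : V, Nat.card {y : V // Adj y x} = k) ∧
  (∀ x : V, Nat.card {y : V // Adj x y ∧ Adj y x} = t) ∧
  (∀ x y : V, x ≠ y → Adj x y → Nat.card {z : V // Adj x z ∧ Adj z y} = lam) ∧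
  (∀ x y : V, x ≠ y → ¬ Adj x y → Nat.card {z : V // Adj x z ∧ Adj z y} = mu)

/-!
A point `g` carries the vertices `(g, B)`, `B ∈ 𝓑_g`, so the number of directed paths of length two
from `(x, A)` to `(y, B)` is the sum, over `g ∈ B`, of the number of blocks of `𝓑_g` that contain
`x`. That number is `0` for `g = x`, and otherwise depends only on whether `g` and `x` are in the
same group. As `B` has `a` points in each group, the sum depends only on whether `x ∈ B`: it has
one same-group term less if so.

The dependence is symmetric in `g` and `x`, so the out-degree of `(x, A)` is the number of pairs
`(g, C)` with `C ∈ 𝓑_x` and `g ∈ C`, and every block has the same size.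
-/

namespace ConstructionI

open Finset

/-- The replication number of the point `x` in the family of blocks `B`: the number of blocks
through `x`, where a block that is repeated in the family counts as often as it occurs. -/
def replication {α ι : Type*} [Fintype ι] [DecidableEq α] (B : ι → Finset α) (x : α) : ℕ :=
  #{i | x ∈ B i}

section Replication

variable {α ι κ : Type*} [Fintype ι] [DecidableEq α]

lemma replication_eq_zero_iff {B : ι → Finset α} {x : α} :
    replication B x = 0 ↔ ∀ i, x ∉ B i := by
  simp [replication, filter_eq_empty_iff]

lemma replication_eq_one_of_disjoint {B : ι → Finset α}
    (hB : Pairwise fun i j => Disjoint (B i) (B j)) {x : α} {i : ι} (hx : x ∈ B i) :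
    replication B x = 1 :=
  (Fintype.existsUnique_iff_card_one _).mp
    ⟨i, hx, fun _ hj => hB.eq (not_disjoint_iff.mpr ⟨x, hj, hx⟩)⟩

lemma replication_comp_of_bijective [Fintype κ] (B : ι → Finset α) {e : κ → ι}
    (he : Function.Bijective e) (x : α) : replication (B ∘ e) x = replication B x :=
  card_bijective e he (by simp)

lemma replication_comp_fst [Fintype κ] (B : ι → Finset α) (x : α) :
    replication (fun i : ι × κ => B i.1) x = replication B x * Fintype.card κ := by
  simp only [replication, ← univ_product_univ, filter_product_left fun i => x ∈ B i,
    card_product, card_univ]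

lemma replication_comp_snd [Fintype κ] (B : ι → Finset α) (x : α) :
    replication (fun i : κ × ι => B i.2) x = Fintype.card κ * replication B x := by
  simp only [replication, ← univ_product_univ, filter_product_right fun i => x ∈ B i,
    card_product, card_univ]

lemma sum_replication [Fintype α] (B : ι → Finset α) :
    ∑ x, replication B x = ∑ i, #(B i) := by
  simpa [replication, bipartiteAbove, bipartiteBelow] using
    sum_card_bipartiteAbove_eq_sum_card_bipartiteBelow (s := univ) (t := univ)
      fun x i => x ∈ B i

end Replication

section Fibers

variable {α γ : Type*} [Fintype γ] [DecidableEq γ] {grp : α → γ} {S : Finset α} {m : ℕ}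

lemma card_eq_card_mul_of_card_fiber_eq (hS : ∀ h, #{x ∈ S | grp x = h} = m) :
    #S = Fintype.card γ * m := by
  simp [card_eq_sum_card_fiberwise (f := grp) (t := univ) (s := S) (by simp), hS]

lemma card_filter_ne_of_card_fiber_eq (hS : ∀ h, #{x ∈ S | grp x = h} = m) (h₀ : γ) :
    #{x ∈ S | grp x ≠ h₀} = (Fintype.card γ - 1) * m := by
  have hsplit := card_filter_add_card_filter_not (s := S) fun x => grp x = h₀
  rw [hS, card_eq_card_mul_of_card_fiber_eq hS] at hsplit
  rw [Nat.sub_one_mul, ← hsplit, Nat.add_sub_cancel_left]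

end Fibers

/-- Blocks `blk g i` attached to the points `g` of a set divided into groups by `grp`, such that
each block has `a` points in each group and misses the point it is attached to, and `x` lies in
`s` or in `c` of the blocks attached to another point `g`, according as `x` and `g` lie in the same
group or not. Construction I yields such blocks, and their digraph `blockAdj` is a DSRG. -/
structure IsGroupDivisible {α ι γ : Type*} [Fintype ι] [DecidableEq α] [DecidableEq γ]
    (grp : α → γ) (blk : α → ι → Finset α) (a s c : ℕ) : Prop where
  card_filter_grp_eq : ∀ g i h, #{x ∈ blk g i | grp x = h} = a
  notMem_self : ∀ g i, g ∉ blk g i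
  replication_of_grp_eq : ∀ g x, x ≠ g → grp x = grp g → replication (blk g) x = s
  replication_of_grp_ne : ∀ g x, grp x ≠ grp g → replication (blk g) x = c

/-- The digraph on pairs (point, index of a block attached to it), in which `(g, B) → (g', B')`
means `g ∈ B'`. -/
def blockAdj {α ι : Type*} (blk : α → ι → Finset α) (x y : α × ι) : Prop :=
  x.1 ∈ blk y.1 y.2

section Counting

variable {α ι : Type*} [Fintype ι]

lemma natCard_blockAdj_and_mem [DecidableEq α] (blk : α → ι → Finset α) (x : α × ι) (S : Finset α) :
    Nat.card {z : α × ι // blockAdj blk x z ∧ z.1 ∈ S} = ∑ g ∈ S, replication (blk g) x.1 := by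
  simp only [replication]
  rw [← card_sigma, ← card_map (Equiv.sigmaEquivProd α ι).toEmbedding]
  exact Nat.subtype_card _ fun z => by simp [mem_map_equiv, blockAdj, and_comm]

lemma natCard_blockAdj_left [Fintype α] [DecidableEq α] (blk : α → ι → Finset α) (x : α × ι) :
    Nat.card {y // blockAdj blk x y} = ∑ g, replication (blk g) x.1 := by
  simpa using natCard_blockAdj_and_mem blk x univ

lemma natCard_blockAdj_right (blk : α → ι → Finset α) (x : α × ι) :
    Nat.card {y // blockAdj blk y x} = #(blk x.1 x.2) * Fintype.card ι := by
  have e : {y : α × ι // y.1 ∈ blk x.1 x.2} ≃ blk x.1 x.2 × ι :=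
    Equiv.prodSubtypeFstEquivSubtypeProd (p := (· ∈ blk x.1 x.2))
  exact (Nat.card_congr e).trans (by simp)

end Counting

namespace IsGroupDivisible

section Sums

variable {α ι γ : Type*} [Fintype ι] [DecidableEq α] [DecidableEq γ]
  {grp : α → γ} {blk : α → ι → Finset α} {a s c : ℕ}

lemma replication_self (H : IsGroupDivisible grp blk a s c) (g : α) :
    replication (blk g) g = 0 :=
  replication_eq_zero_iff.mpr (H.notMem_self g)

lemma replication_comm (H : IsGroupDivisible grp blk a s c) (g x : α) :
    replication (blk g) x = replication (blk x) g := by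
  obtain rfl | hne := eq_or_ne x g
  · rfl
  by_cases hgrp : grp x = grp g
  · rw [H.replication_of_grp_eq g x hne hgrp, H.replication_of_grp_eq x g hne.symm hgrp.symm]
  · rw [H.replication_of_grp_ne g x hgrp, H.replication_of_grp_ne x g (Ne.symm hgrp)]

lemma sum_replication_same_grp (H : IsGroupDivisible grp blk a s c) (x : α) (S : Finset α) :
    ∑ g ∈ S with grp g = grp x, replication (blk g) x =
      #({g ∈ S | grp g = grp x}.erase x) * s := by
  rw [← sum_erase _ (f := fun g => replication (blk g) x) (H.replication_self x)]
  refine sum_const_nat fun g hg => ?_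
  simp only [mem_erase, mem_filter] at hg
  exact H.replication_of_grp_eq g x hg.1.symm hg.2.2.symm

lemma sum_replication_other_grp (H : IsGroupDivisible grp blk a s c) (x : α) (S : Finset α) :
    ∑ g ∈ S with grp g ≠ grp x, replication (blk g) x = #{g ∈ S | grp g ≠ grp x} * c :=
  sum_const_nat fun g hg => H.replication_of_grp_ne g x (mem_filter.mp hg).2.symm

variable [Fintype γ]

lemma card_blk (H : IsGroupDivisible grp blk a s c) (g : α) (i : ι) :
    #(blk g i) = Fintype.card γ * a :=
  card_eq_card_mul_of_card_fiber_eq (H.card_filter_grp_eq g i)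

lemma sum_replication_blk (H : IsGroupDivisible grp blk a s c) (x g : α) (i : ι) :
    ∑ z ∈ blk g i, replication (blk z) x =
      #({z ∈ blk g i | grp z = grp x}.erase x) * s + (Fintype.card γ - 1) * a * c := by
  rw [← sum_filter_add_sum_filter_not _ (fun z => grp z = grp x), H.sum_replication_same_grp,
    H.sum_replication_other_grp, card_filter_ne_of_card_fiber_eq (H.card_filter_grp_eq g i)]

lemma sum_replication_blk_of_notMem (H : IsGroupDivisible grp blk a s c) {x g : α} {i : ι}
    (hx : x ∉ blk g i) :
    ∑ z ∈ blk g i, replication (blk z) x = a * s + (Fintype.card γ - 1) * a * c := by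
  rw [H.sum_replication_blk, erase_eq_of_notMem (by simp [hx]), H.card_filter_grp_eq]

lemma sum_replication_blk_of_mem (H : IsGroupDivisible grp blk a s c) {x g : α} {i : ι}
    (hx : x ∈ blk g i) :
    ∑ z ∈ blk g i, replication (blk z) x = (a - 1) * s + (Fintype.card γ - 1) * a * c := by
  rw [H.sum_replication_blk, card_erase_of_mem (by simp [hx]), H.card_filter_grp_eq]

lemma sum_replication_point [Fintype α] (H : IsGroupDivisible grp blk a s c) (x : α) :
    ∑ g, replication (blk g) x = Fintype.card γ * a * Fintype.card ι := by
  calc ∑ g, replication (blk g) x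
      = ∑ g, replication (blk x) g := sum_congr rfl fun g _ => H.replication_comm g x
    _ = ∑ i, #(blk x i) := sum_replication (blk x)
    _ = Fintype.card γ * a * Fintype.card ι := by simp [H.card_blk, mul_comm]

end Sums

theorem isDSRG_blockAdj {α ι : Type} {γ : Type*} [Fintype α] [DecidableEq α] [Fintype ι]
    [Fintype γ] [DecidableEq γ] {grp : α → γ} {blk : α → ι → Finset α} {a s c : ℕ}
    (H : IsGroupDivisible grp blk a s c) :
    IsDSRG (blockAdj blk)
      (Fintype.card α * Fintype.card ι) (Fintype.card γ * a * Fintype.card ι)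
      (a * s + (Fintype.card γ - 1) * a * c)
      ((a - 1) * s + (Fintype.card γ - 1) * a * c)
      (a * s + (Fintype.card γ - 1) * a * c) := by
  have hirrefl (x : α × ι) : ¬ blockAdj blk x x := H.notMem_self x.1 x.2
  have hpath (x y : α × ι) : Nat.card {z // blockAdj blk x z ∧ blockAdj blk z y} =
      ∑ g ∈ blk y.1 y.2, replication (blk g) x.1 := natCard_blockAdj_and_mem blk x _
  have hpath_of_not (x y : α × ι) (hxy : ¬ blockAdj blk x y) :=
    (hpath x y).trans (H.sum_replication_blk_of_notMem hxy)
  refine ⟨inferInstance, hirrefl, by simp, fun x => ?_, fun x => ?_,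
    fun x => hpath_of_not x x (hirrefl x), fun x y _ hxy => ?_, fun x y _ => hpath_of_not x y⟩
  · rw [natCard_blockAdj_left, H.sum_replication_point]
  · rw [natCard_blockAdj_right, H.card_blk]
  · rw [hpath, H.sum_replication_blk_of_mem hxy]

end IsGroupDivisible

/-- The block `B_{gl,j} = X_{gl} ∪ (B_j \ P_{hj})` of Construction I, where `i = (l, j)`, `g` lies
in the group `h = grp g`, and `P h j` is the paper's `P_{hj}`, so that `B_j = ⋃ h, P h j`. -/
def block {α γ ι κ : Type*} [DecidableEq α] [Fintype γ] (grp : α → γ) (P : γ → κ → Finset α)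
    (X : α → ι → Finset α) (g : α) (i : ι × κ) : Finset α :=
  X g i.1 ∪ ((univ.biUnion fun h => P h i.2) \ P (grp g) i.2)

section Block

variable {α γ ι κ : Type*} [DecidableEq α] [Fintype γ] {grp : α → γ} {P : γ → κ → Finset α}
  {X : α → ι → Finset α}

lemma mem_block_of_grp_eq (hP : ∀ h j, ∀ x ∈ P h j, grp x = h) {x g : α}
    (hxg : grp x = grp g) (i : ι × κ) : x ∈ block grp P X g i ↔ x ∈ X g i.1 := by
  have hdiff : x ∉ (univ.biUnion fun h => P h i.2) \ P (grp g) i.2 := by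
    simp only [mem_sdiff, mem_biUnion, mem_univ, true_and, not_and, not_not]
    rintro ⟨h, hx⟩
    rwa [← hxg, hP h i.2 x hx]
  rw [block, mem_union, or_iff_left hdiff]

lemma mem_block_of_grp_ne (hP : ∀ h j, ∀ x ∈ P h j, grp x = h)
    (hX : ∀ g l, ∀ x ∈ X g l, grp x = grp g) {x g : α}
    (hxg : grp x ≠ grp g) (i : ι × κ) : x ∈ block grp P X g i ↔ x ∈ P (grp x) i.2 := by
  rw [block, mem_union, or_iff_right fun hx => hxg (hX g i.1 x hx), mem_sdiff, mem_biUnion,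
    and_iff_left fun hx => hxg (hP _ i.2 x hx)]
  refine ⟨?_, fun hx => ⟨grp x, mem_univ _, hx⟩⟩
  rintro ⟨h, -, hx⟩
  rwa [hP h i.2 x hx]

lemma card_filter_block [DecidableEq γ] (hP : ∀ h j, ∀ x ∈ P h j, grp x = h)
    (hX : ∀ g l, ∀ x ∈ X g l, grp x = grp g) {a : ℕ} (hPcard : ∀ h j, #(P h j) = a)
    (hXcard : ∀ g l, #(X g l) = a) (g : α) (i : ι × κ) (h : γ) :
    #{x ∈ block grp P X g i | grp x = h} = a := by
  obtain rfl | hne := eq_or_ne h (grp g)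
  · rw [← hXcard g i.1]
    congr 1
    ext x
    rw [mem_filter, and_congr_left fun hx => mem_block_of_grp_eq hP hx i]
    exact and_iff_left_of_imp (hX g i.1 x)
  · rw [← hPcard h i.2]
    congr 1
    ext x
    rw [mem_filter]
    constructor
    · rintro ⟨hx, rfl⟩
      exact (mem_block_of_grp_ne hP hX hne i).mp hx
    · intro hx
      obtain rfl := hP h i.2 x hx
      exact ⟨(mem_block_of_grp_ne hP hX hne i).mpr hx, rfl⟩

variable [Fintype ι] [Fintype κ]

lemma replication_block_of_grp_eq (hP : ∀ h j, ∀ x ∈ P h j, grp x = h) {x g : α}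
    (hxg : grp x = grp g) :
    replication (block grp P X g) x = replication (X g) x * Fintype.card κ := by
  rw [← replication_comp_fst]
  simp only [replication, mem_block_of_grp_eq hP hxg]

lemma replication_block_of_grp_ne (hP : ∀ h j, ∀ x ∈ P h j, grp x = h)
    (hX : ∀ g l, ∀ x ∈ X g l, grp x = grp g) {x g : α} (hxg : grp x ≠ grp g) :
    replication (block grp P X g) x = Fintype.card ι * replication (P (grp x)) x := by
  rw [← replication_comp_snd]
  simp only [replication, mem_block_of_grp_ne hP hX hxg]

lemma isGroupDivisible_block [DecidableEq γ] (hP : ∀ h j, ∀ x ∈ P h j, grp x = h)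
    (hX : ∀ g l, ∀ x ∈ X g l, grp x = grp g) (hXself : ∀ g l, g ∉ X g l) {a ρ τ : ℕ}
    (hPcard : ∀ h j, #(P h j) = a) (hPrep : ∀ x, replication (P (grp x)) x = ρ)
    (hXcard : ∀ g l, #(X g l) = a)
    (hXrep : ∀ g x, x ≠ g → grp x = grp g → replication (X g) x = τ) :
    IsGroupDivisible grp (block grp P X) a (τ * Fintype.card κ) (Fintype.card ι * ρ) where
  card_filter_grp_eq := card_filter_block hP hX hPcard hXcard
  notMem_self g i hg := hXself g i.1 ((mem_block_of_grp_eq hP rfl i).mp hg)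
  replication_of_grp_eq g x hne hxg := by
    rw [replication_block_of_grp_eq hP hxg, hXrep g x hne hxg]
  replication_of_grp_ne g x hxg := by rw [replication_block_of_grp_ne hP hX hxg, hPrep]

end Block

lemma mem_iff_eq_of_disjoint {α γ : Type*} {G : γ → Finset α} {grp : α → γ}
    (hG : Pairwise fun i j => Disjoint (G i) (G j)) (hgrp : ∀ x, x ∈ G (grp x)) (h : γ) (x : α) :
    x ∈ G h ↔ grp x = h :=
  ⟨fun hx => hG.eq (not_disjoint_iff.mpr ⟨x, hgrp x, hx⟩), fun hx => hx ▸ hgrp x⟩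

end ConstructionI

open Finset ConstructionI in
/-- Instead of `q` there are `|κ|` blocks in each `𝓟_h`, with any replication number `ρ`, and
instead of partitioning `G_h \ {g}` the blocks `X g l` cover each of its points `τ` times. In
Construction I `|κ| = q`, `ρ = a` and `τ = 1`. -/
theorem constructionI_dsrg_general
    {α ι κ : Type} {γ : Type*} [Fintype α] [DecidableEq α] [Fintype ι] [Fintype κ]
    [Fintype γ] {grp : α → γ} {P : γ → κ → Finset α} {X : α → ι → Finset α} {a ρ τ : ℕ}
    (hP : ∀ h j, ∀ x ∈ P h j, grp x = h)
    (hPcard : ∀ h j, #(P h j) = a)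
    (hPrep : ∀ x, replication (P (grp x)) x = ρ)
    (hX : ∀ g l, ∀ x ∈ X g l, grp x = grp g)
    (hXself : ∀ g l, g ∉ X g l)
    (hXcard : ∀ g l, #(X g l) = a)
    (hXrep : ∀ g x, x ≠ g → grp x = grp g → replication (X g) x = τ) :
    IsDSRG (blockAdj (block grp P X))
      (Fintype.card α * (Fintype.card ι * Fintype.card κ))
      (Fintype.card γ * a * (Fintype.card ι * Fintype.card κ))
      (a * (τ * Fintype.card κ) + (Fintype.card γ - 1) * a * (Fintype.card ι * ρ))
      ((a - 1) * (τ * Fintype.card κ) + (Fintype.card γ - 1) * a * (Fintype.card ι * ρ))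
      (a * (τ * Fintype.card κ) + (Fintype.card γ - 1) * a * (Fintype.card ι * ρ)) := by
  classical
  rw [← Fintype.card_prod ι κ]
  exact (isGroupDivisible_block hP hX hXself hPcard hPrep hXcard hXrep).isDSRG_blockAdj

/-- **Construction I.**  With `q = ab + 1`, the point set `P` (modelled by the finite
type `α` of size `rq`) is partitioned into `r` groups `G 1, …, G r` of size `q`;
`Pblk j` enumerates the `q` blocks of the tactical configuration `𝓟_j` on `G j`
(each an `a`-subset, each point of `G j` in exactly `a` blocks); the sets
`B_j = ⋃_h Pblk h (σ h j)` pick exactly one block from each `𝓟_h` (with each block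
used for exactly one `j`, via the bijections `σ h`), so `P_{hj} = Pblk h (σ h j)`;
and for each point `g` (lying in group `grp g`), `X g 1, …, X g b` is a partition of
`G (grp g) \ {g}` into `b` parts of size `a`.  The vertices are the pairs
`(g, B_{gl,j})`, encoded by the index triples `(g, l, j)`, with
`B_{gl,j} = X g l ∪ (B_j \ P_{(grp g) j})`, and `(g,B) → (g',B')` iff `g ∈ B'`.
This directed graph is a DSRG with parameters
`(rq²b, rq(q−1), r(q−1)a + a, q(a−1) + (r−1)(q−1)a, r(q−1)a + a)`. -/
theorem constructionI_dsrg
    {α : Type} [Fintype α] [DecidableEq α]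
    (r q a b : ℕ) (hr : 1 < r) (hq : 1 < q) (ha : 1 < a) (hb : 1 < b)
    (hab : q = a * b + 1)
    (G : Fin r → Finset α)
    (hGdisj : ∀ i j : Fin r, i ≠ j → Disjoint (G i) (G j))
    (hGcard : ∀ i : Fin r, (G i).card = q)
    (grp : α → Fin r) (hgrp : ∀ x : α, x ∈ G (grp x))
    (Pblk : Fin r → Fin q → Finset α)
    (hPsub : ∀ (j : Fin r) (i : Fin q), Pblk j i ⊆ G j)
    (hPcard : ∀ (j : Fin r) (i : Fin q), (Pblk j i).card = a)
    (hPreg : ∀ j : Fin r, ∀ x ∈ G j,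
      (Finset.univ.filter (fun i : Fin q => x ∈ Pblk j i)).card = a)
    (σ : Fin r → Fin q → Fin q) (hσ : ∀ h : Fin r, Function.Bijective (σ h))
    (X : α → Fin b → Finset α)
    (hXsub : ∀ (g : α) (l : Fin b), X g l ⊆ G (grp g) \ {g})
    (hXcard : ∀ (g : α) (l : Fin b), (X g l).card = a)
    (hXdisj : ∀ (g : α) (l l' : Fin b), l ≠ l' → Disjoint (X g l) (X g l'))
    (hXcover : ∀ g : α, ∀ x ∈ G (grp g) \ {g}, ∃ l : Fin b, x ∈ X g l) :
    IsDSRG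
      (fun x y : α × Fin b × Fin q =>
        x.1 ∈ X y.1 y.2.1 ∪
          ((Finset.univ.biUnion fun h : Fin r => Pblk h (σ h y.2.2)) \
            Pblk (grp y.1) (σ (grp y.1) y.2.2)))
      (r * q * q * b) (r * q * (q - 1)) (r * (q - 1) * a + a)
      (q * (a - 1) + (r - 1) * (q - 1) * a) (r * (q - 1) * a + a) := by
  have hG := ConstructionI.mem_iff_eq_of_disjoint (fun i j => hGdisj i j) hgrp
  have hα : Fintype.card α = r * q := by
    simpa using ConstructionI.card_eq_card_mul_of_card_fiber_eq (grp := grp) (S := Finset.univ)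
      fun h => by rw [← hGcard h]; congr 1; ext x; simp [hG]
  have hXmem g l x (hx : x ∈ X g l) : grp x = grp g ∧ x ≠ g := by
    simpa [hG] using hXsub g l hx
  have hXrep g x (hne : x ≠ g) (hxg : grp x = grp g) : ConstructionI.replication (X g) x = 1 := by
    obtain ⟨l, hl⟩ := hXcover g x (by simp [hG, hne, hxg])
    exact ConstructionI.replication_eq_one_of_disjoint (fun l l' => hXdisj g l l') hl
  have hPrep x : ConstructionI.replication (Pblk (grp x) ∘ σ (grp x)) x = a :=
    (ConstructionI.replication_comp_of_bijective _ (hσ _) x).trans (hPreg _ x (hgrp x))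
  have H := constructionI_dsrg_general (P := fun h => Pblk h ∘ σ h)
    (fun h j x hx => (hG h x).mp (hPsub h _ hx)) (fun h j => hPcard h _) hPrep
    (fun g l x hx => (hXmem g l x hx).1) (fun g l hg => (hXmem g l g hg).2 rfl) hXcard hXrep
  change IsDSRG (ConstructionI.blockAdj
    (ConstructionI.block grp (fun h => Pblk h ∘ σ h) X)) _ _ _ _ _
  obtain ⟨n, rfl⟩ := Nat.exists_eq_add_of_le' hr.le
  subst hab
  simp only [Fintype.card_fin, hα, Nat.add_sub_cancel] at H ⊢
  convert H using 1 <;> ring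
end

section
/- Construction I with b = 1. Let D be the directed graph on the vertex set V = {(g, B) : g ∈ P, B ∈ 𝓑_g}, with adjacency (g, B) → (g′, B′) if and only if g ∈ B′. Then D is a directed strongly regular graph with parameters (v, k, t, λ, μ) = (rq², rq(q−1), (q−1)(rq−r+1), r(q−1)² − 1, (q−1)(rq−r+1)). -/
/-!
Each base block `B_j` misses exactly one point of every group, and `j` labels that point within the
group.  Labelling all points this way turns a vertex `(g, B_{g,j})` into a triple (group of `g`,
label of `g`, label `j`), and the block `B_{g,j}` again misses one point of each group: `g` itself
in the group of `g`, and the point labelled `j` in every other group.  Thus `x → y` says that the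
point of `x` differs from the point of its group missed by the block of `y`.  Once the group of the
varying vertex is fixed, the conditions on its two labels are independent, each excluding at most
two values, so neighbours and paths of length two are counted by products.
-/

theorem IsDSRG.of_relIso {V W : Type} {R : V → V → Prop} {S : W → W → Prop}
    {v k t lam mu : ℕ} (h : IsDSRG R v k t lam mu) (e : R ≃r S) : IsDSRG S v k t lam mu := by
  obtain ⟨_, hloop, hv, hout, hin, ht, hlam, hmu⟩ := h
  have adj_iff (x y : W) : S x y ↔ R (e.symm x) (e.symm y) := e.symm.map_rel_iff.symm
  refine ⟨Finite.of_equiv V e.toEquiv, fun x => by simpa only [adj_iff] using hloop _,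
    (Nat.card_congr e.symm.toEquiv).trans hv, fun x => ?_, fun x => ?_, fun x => ?_,
    fun x y hxy hadj => ?_, fun x y hxy hadj => ?_⟩
  · rw [← hout (e.symm x)]
    exact Nat.card_congr (e.symm.subtypeEquiv fun y => adj_iff x y)
  · rw [← hin (e.symm x)]
    exact Nat.card_congr (e.symm.subtypeEquiv fun y => adj_iff y x)
  · rw [← ht (e.symm x)]
    exact Nat.card_congr (e.symm.subtypeEquiv fun y => and_congr (adj_iff x y) (adj_iff y x))
  · rw [← hlam _ _ (e.symm.injective.ne hxy) ((adj_iff x y).1 hadj)]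
    exact Nat.card_congr (e.symm.subtypeEquiv fun z => and_congr (adj_iff x z) (adj_iff z y))
  · rw [← hmu _ _ (e.symm.injective.ne hxy) (mt (adj_iff x y).2 hadj)]
    exact Nat.card_congr (e.symm.subtypeEquiv fun z => and_congr (adj_iff x z) (adj_iff z y))

section Counting

variable {ι β γ : Type*}

theorem natCard_subtype_notMem_prod [Fintype β] [Fintype γ]
    (s : Finset β) (t : Finset γ) :
    Nat.card {w : β × γ // w.1 ∉ s ∧ w.2 ∉ t} =
      (Fintype.card β - s.card) * (Fintype.card γ - t.card) := by
  classical
  rw [← Finset.card_compl, ← Finset.card_compl, ← Finset.card_product]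
  exact Nat.subtype_card _ (by simp)

theorem natCard_subtype_prod_prod_eq_sum [Fintype ι] [Finite β] [Finite γ]
    (p : (ι × β) × γ → Prop) :
    Nat.card {z // p z} = ∑ c, Nat.card {w : β × γ // p ((c, w.1), w.2)} := by
  rw [← Nat.card_sigma]
  exact Nat.card_congr <| ((Equiv.prodAssoc ι β γ).subtypeEquiv fun _ => Iff.rfl).trans
    (Equiv.subtypeProdEquivSigmaSubtype fun c (w : β × γ) => p ((c, w.1), w.2))

end Counting

section CoordinateDigraph

variable {ι κ : Type*} [DecidableEq ι]

/-- A vertex `y = ((c, d), j)` stands for the point labelled `d` in the group `c` together with its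
`j`-th block; `missedLabel y h` is the label of the only point of the group `h` outside that
block. -/
def missedLabel (y : (ι × κ) × κ) (h : ι) : κ :=
  if h = y.1.1 then y.1.2 else y.2

/-- The adjacency relation of Construction I in coordinates (group, label of the point, index of
the block): the point of `x` lies in the block of `y`. -/
def CoordAdj (x y : (ι × κ) × κ) : Prop :=
  x.1.2 ≠ missedLabel y x.1.1

theorem not_coordAdj_self (x : (ι × κ) × κ) : ¬ CoordAdj x x := by
  simp [CoordAdj, missedLabel]

variable [Fintype ι] [Fintype κ]

theorem natCard_coordAdj_out (x : (ι × κ) × κ) :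
    Nat.card {y // CoordAdj x y} = Fintype.card ι * Fintype.card κ * (Fintype.card κ - 1) := by
  classical
  have card_fiber (c : ι) : Nat.card {w : κ × κ // CoordAdj x ((c, w.1), w.2)} =
      Fintype.card κ * (Fintype.card κ - 1) := by
    by_cases hc : x.1.1 = c
    · simpa [CoordAdj, missedLabel, hc, eq_comm, mul_comm] using
        natCard_subtype_notMem_prod {x.1.2} (∅ : Finset κ)
    · simpa [CoordAdj, missedLabel, hc, eq_comm] using
        natCard_subtype_notMem_prod (∅ : Finset κ) {x.1.2}
  simp only [natCard_subtype_prod_prod_eq_sum, card_fiber, Finset.sum_const, Finset.card_univ,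
    smul_eq_mul, mul_assoc]

theorem natCard_coordAdj_in (y : (ι × κ) × κ) :
    Nat.card {x // CoordAdj x y} = Fintype.card ι * Fintype.card κ * (Fintype.card κ - 1) := by
  classical
  have card_fiber (c : ι) : Nat.card {w : κ × κ // CoordAdj ((c, w.1), w.2) y} =
      Fintype.card κ * (Fintype.card κ - 1) := by
    simpa [CoordAdj, mul_comm] using
      natCard_subtype_notMem_prod {missedLabel y c} (∅ : Finset κ)
  simp only [natCard_subtype_prod_prod_eq_sum, card_fiber, Finset.sum_const, Finset.card_univ,
    smul_eq_mul, mul_assoc]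

theorem natCard_coordAdj_paths [DecidableEq κ] (x y : (ι × κ) × κ) :
    Nat.card {z // CoordAdj x z ∧ CoordAdj z y} =
      (Fintype.card κ - ({x.1.2, missedLabel y x.1.1} : Finset κ).card) * Fintype.card κ +
        (Fintype.card ι - 1) * (Fintype.card κ - 1) ^ 2 := by
  have card_fiber (c : ι) :
      Nat.card {w : κ × κ // CoordAdj x ((c, w.1), w.2) ∧ CoordAdj ((c, w.1), w.2) y} =
        if c = x.1.1 then
          (Fintype.card κ - ({x.1.2, missedLabel y x.1.1} : Finset κ).card) * Fintype.card κ
        else (Fintype.card κ - 1) ^ 2 := by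
    split_ifs with hc
    · simpa [CoordAdj, missedLabel, hc, eq_comm] using
        natCard_subtype_notMem_prod {x.1.2, missedLabel y x.1.1} (∅ : Finset κ)
    · simpa [CoordAdj, missedLabel, Ne.symm hc, eq_comm, and_comm, sq] using
        natCard_subtype_notMem_prod {missedLabel y c} {x.1.2}
  rw [natCard_subtype_prod_prod_eq_sum]
  simp [card_fiber, Finset.sum_ite, Finset.filter_eq', Finset.filter_ne']

theorem natCard_coordAdj_paths_of_coordAdj {x y : (ι × κ) × κ} (h : CoordAdj x y) :
    Nat.card {z // CoordAdj x z ∧ CoordAdj z y} =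
      Fintype.card ι * (Fintype.card κ - 1) ^ 2 - 1 := by
  classical
  obtain ⟨m, hm⟩ : ∃ m, Fintype.card ι = m + 1 :=
    Nat.exists_eq_add_of_le' (Fintype.card_pos_iff.2 ⟨x.1.1⟩)
  obtain ⟨n, hn⟩ : ∃ n, Fintype.card κ = n + 2 :=
    Nat.exists_eq_add_of_le' (Fintype.one_lt_card_iff.2 ⟨_, _, h⟩)
  rw [natCard_coordAdj_paths, Finset.card_pair h, hm, hn]
  simp only [Nat.add_sub_cancel, Nat.add_succ_sub_one]
  exact (Nat.sub_eq_of_eq_add (by ring)).symm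

theorem natCard_coordAdj_paths_of_not_coordAdj {x y : (ι × κ) × κ} (h : ¬ CoordAdj x y) :
    Nat.card {z // CoordAdj x z ∧ CoordAdj z y} =
      (Fintype.card κ - 1) * (Fintype.card ι * Fintype.card κ - Fintype.card ι + 1) := by
  classical
  obtain ⟨m, hm⟩ : ∃ m, Fintype.card ι = m + 1 :=
    Nat.exists_eq_add_of_le' (Fintype.card_pos_iff.2 ⟨x.1.1⟩)
  obtain ⟨n, hn⟩ : ∃ n, Fintype.card κ = n + 1 :=
    Nat.exists_eq_add_of_le' (Fintype.card_pos_iff.2 ⟨x.2⟩)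
  have card_mul_sub : (m + 1) * (n + 1) - (m + 1) = (m + 1) * n := Nat.sub_eq_of_eq_add (by ring)
  rw [natCard_coordAdj_paths, ← not_ne_iff.1 h, Finset.pair_eq_singleton, Finset.card_singleton,
    hm, hn]
  simp only [Nat.add_sub_cancel, card_mul_sub]
  ring

theorem isDSRG_coordAdj (ι κ : Type) [DecidableEq ι] [Fintype ι] [Fintype κ] :
    IsDSRG (CoordAdj (ι := ι) (κ := κ)) (Fintype.card ι * Fintype.card κ * Fintype.card κ)
      (Fintype.card ι * Fintype.card κ * (Fintype.card κ - 1))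
      ((Fintype.card κ - 1) * (Fintype.card ι * Fintype.card κ - Fintype.card ι + 1))
      (Fintype.card ι * (Fintype.card κ - 1) ^ 2 - 1)
      ((Fintype.card κ - 1) * (Fintype.card ι * Fintype.card κ - Fintype.card ι + 1)) :=
  ⟨inferInstance, not_coordAdj_self, by simp, natCard_coordAdj_out, natCard_coordAdj_in,
    -- mutual neighbours of `x` are the paths of length two from `x` to itself, and `¬ x → x`
    fun x => natCard_coordAdj_paths_of_not_coordAdj (not_coordAdj_self x),
    fun _ _ _ => natCard_coordAdj_paths_of_coordAdj,
    fun _ _ _ => natCard_coordAdj_paths_of_not_coordAdj⟩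

end CoordinateDigraph

section Blocks

variable {α ι κ : Type*} [DecidableEq α]

theorem exists_equiv_eq_erase [Fintype κ] {s : Finset α} (hs : Fintype.card κ = s.card)
    {B : κ → Finset α} (hsub : ∀ i, B i ⊆ s) (hcard : ∀ i, (B i).card + 1 = s.card)
    (hinj : Function.Injective B) : ∃ e : κ ≃ s, ∀ i, B i = s.erase (e i) := by
  have exists_missed (i : κ) : ∃ x : s, B i = s.erase x := by
    obtain ⟨x, hx, hins⟩ := Finset.exists_eq_insert_iff.2 ⟨hsub i, hcard i⟩
    exact ⟨⟨x, hins ▸ Finset.mem_insert_self x _⟩, by simp [← hins, hx]⟩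
  choose missed hmissed using exists_missed
  have missed_injective : Function.Injective missed := fun i j hij =>
    hinj (by rw [hmissed, hmissed, hij])
  have missed_bijective := (Fintype.bijective_iff_injective_and_card missed).2
    ⟨missed_injective, by simpa using hs⟩
  exact ⟨Equiv.ofBijective missed missed_bijective, hmissed⟩

theorem exists_prod_equiv_eq_erase [Fintype κ] {G : ι → Finset α} {P : ι → κ → Finset α}
    (hG : ∀ x, ∃! h, x ∈ G h) (hGcard : ∀ h, Fintype.card κ = (G h).card)
    (hPsub : ∀ h i, P h i ⊆ G h) (hPcard : ∀ h i, (P h i).card + 1 = (G h).card)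
    (hPinj : ∀ h, Function.Injective (P h)) :
    ∃ e : ι × κ ≃ α, ∀ h i, e (h, i) ∈ G h ∧ P h i = (G h).erase (e (h, i)) := by
  choose e he using fun h =>
    exists_equiv_eq_erase (hGcard h) (hPsub h) (hPcard h) (hPinj h)
  let point : ι × κ ≃ α := (Equiv.sigmaEquivProd ι κ).symm.trans
    ((Equiv.sigmaCongrRight e).trans (Set.sigmaEquiv (fun h => (G h : Set α)) hG))
  exact ⟨point, fun h i => ⟨(e h i).2, he h i⟩⟩

variable [Fintype ι]

/-- The block `B_{g,j}` of Construction I with base blocks `B_j = ⋃ h, P h j`, for a point `g` of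
the group `c`; the group is passed as an argument rather than recovered from `g`. -/
def block (G : ι → Finset α) (P : ι → κ → Finset α) (c : ι) (g : α) (j : κ) : Finset α :=
  (G c \ {g}) ∪ ((Finset.univ.biUnion fun h => P h j) \ P c j)

theorem mem_block_iff [DecidableEq ι] {G : ι → Finset α} {P : ι → κ → Finset α}
    (hG : ∀ x, ∃! h, x ∈ G h) (hPsub : ∀ h i, P h i ⊆ G h) {a : ι} {x : α} (hx : x ∈ G a)
    (c : ι) (g : α) (j : κ) :
    x ∈ block G P c g j ↔ if a = c then x ≠ g else x ∈ P a j := by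
  have eq_of_mem {h : ι} (hxh : x ∈ G h) : h = a := (hG x).unique hxh hx
  have mem_base_iff : (∃ h, x ∈ P h j) ↔ x ∈ P a j :=
    ⟨fun ⟨h, hxh⟩ => eq_of_mem (hPsub h j hxh) ▸ hxh, fun h => ⟨a, h⟩⟩
  split_ifs with hac
  · subst hac
    simp [block, hx, mem_base_iff]
  · have notMem_group : x ∉ G c := fun h => hac (eq_of_mem h).symm
    simp [block, notMem_group, mem_base_iff, mt (@hPsub c j x) notMem_group]

end Blocks

theorem mem_block_iff_coordAdj {α ι κ : Type*} [DecidableEq α] [Fintype ι] [DecidableEq ι]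
    {G : ι → Finset α} {P : ι → κ → Finset α} (hG : ∀ x, ∃! h, x ∈ G h) (e : ι × κ ≃ α)
    (he : ∀ h i, e (h, i) ∈ G h ∧ P h i = (G h).erase (e (h, i))) (x y : (ι × κ) × κ) :
    e x.1 ∈ block G P y.1.1 (e y.1) y.2 ↔ CoordAdj x y := by
  have hPsub (h : ι) (i : κ) : P h i ⊆ G h := (he h i).2 ▸ Finset.erase_subset _ _
  obtain ⟨⟨a, b⟩, i⟩ := x
  obtain ⟨⟨c, d⟩, j⟩ := y
  rw [mem_block_iff hG hPsub (he a b).1]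
  by_cases hac : a = c
  · simp [CoordAdj, missedLabel, hac]
  · simp [CoordAdj, missedLabel, hac, (he a j).2, (he a b).1]

/-- **Construction I with `b = 1`.**  The point set `P` (the finite type `α` of size
`rq`) is partitioned into `r` groups `G 1, …, G r` of size `q`; for each group `G j`,
`Pblk j 1, …, Pblk j q` are pairwise distinct `(q−1)`-element subsets of `G j`
(hence exactly the `q` such subsets), and `B_i = ⋃_j Pblk j i`.  For a point `g` in
group `grp g`, the block `B_{g,j} = (G (grp g) \ {g}) ∪ (B_j \ Pblk (grp g) j)`.
The vertices are the pairs `(g, B_{g,j})`, encoded by the index pairs `(g, j)`, with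
`(g,B) → (g',B')` iff `g ∈ B'`.  This directed graph is a DSRG with parameters
`(rq², rq(q−1), (q−1)(rq−r+1), r(q−1)² − 1, (q−1)(rq−r+1))`. -/
theorem constructionI_b_eq_one_dsrg
    {α : Type} [Fintype α] [DecidableEq α]
    (r q : ℕ) (hr : 1 < r) (hq : 1 < q)
    (G : Fin r → Finset α)
    (hGdisj : ∀ i j : Fin r, i ≠ j → Disjoint (G i) (G j))
    (hGcard : ∀ i : Fin r, (G i).card = q)
    (grp : α → Fin r) (hgrp : ∀ x : α, x ∈ G (grp x))
    (Pblk : Fin r → Fin q → Finset α)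
    (hPsub : ∀ (j : Fin r) (i : Fin q), Pblk j i ⊆ G j)
    (hPcard : ∀ (j : Fin r) (i : Fin q), (Pblk j i).card = q - 1)
    (hPinj : ∀ j : Fin r, Function.Injective (Pblk j)) :
    IsDSRG
      (fun x y : α × Fin q =>
        x.1 ∈ (G (grp y.1) \ {y.1}) ∪
          ((Finset.univ.biUnion fun h : Fin r => Pblk h y.2) \ Pblk (grp y.1) y.2))
      (r * q * q) (r * q * (q - 1)) ((q - 1) * (r * q - r + 1))
      (r * (q - 1) ^ 2 - 1) ((q - 1) * (r * q - r + 1)) := by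
  have hG (x : α) : ∃! h, x ∈ G h :=
    ⟨grp x, hgrp x, fun h hxh => by_contra fun hne =>
      Finset.disjoint_left.1 (hGdisj h (grp x) hne) hxh (hgrp x)⟩
  obtain ⟨point, hpoint⟩ := exists_prod_equiv_eq_erase hG (by simp [hGcard]) hPsub
    (fun h i => by rw [hPcard, hGcard]; omega) hPinj
  have grp_point (c : Fin r × Fin q) : grp (point c) = c.1 :=
    (hG _).unique (hgrp _) (hpoint c.1 c.2).1
  have adj_iff (x y : (Fin r × Fin q) × Fin q) :
      point x.1 ∈ block G Pblk (grp (point y.1)) (point y.1) y.2 ↔ CoordAdj x y := by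
    rw [grp_point]
    exact mem_block_iff_coordAdj hG point hpoint x y
  have coord_dsrg := isDSRG_coordAdj (Fin r) (Fin q)
  simp only [Fintype.card_fin] at coord_dsrg
  exact coord_dsrg.of_relIso ⟨point.prodCongr (Equiv.refl _), adj_iff _ _⟩
end

section
/- Construction I with a = 1. Let D = D(𝓣^π) be the directed graph on the vertex set V = {(g, B) : g ∈ P, B ∈ 𝓒_g^π}, with adjacency (g, B) → (g′, B′) if and only if g ∈ B′. Then D is a directed strongly regular graph with parameters (v, k, t, λ, μ) = (rq²(q−1), rq(q−1), rq − r + 1, rq − r − q + 1, rq − r + 1). -/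
/-!
A block of `𝓒_p` lies in the pencil of its unique point `i` in the group of `p`, and `i ≠ p`.
Hence the number of blocks of `𝓒_p` through a point `g` is `0` if `g = p`, it is `q` (all of the
pencil of `g`) if `g ≠ p` lies in the group of `p`, and otherwise it is `q - 1`: by double
counting, each of the `q - 1` pencils involved has exactly one block through `g`. Summing over all
points `p` counts out-neighbors. Summing over the points `p` of a transversal block counts paths of
length two, where the one `p` in the group of `g` contributes `0` or `q` according as `g` is on the
block, and each of the other `r - 1` contributes `q - 1`.
-/

open Finset

lemma natCard_flag_subtype {α β : Type*} (C : α → Finset β) (S : Finset α)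
    (P : β → Prop) [DecidablePred P] :
    Nat.card {z : {x : α × β // x.2 ∈ C x.1} // P z.1.2 ∧ z.1.1 ∈ S} =
      ∑ p ∈ S, #{B ∈ C p | P B} := by
  rw [← card_sigma, ← Nat.card_eq_finsetCard]
  exact Nat.card_congr
    { toFun := fun z => ⟨⟨z.1.1.1, z.1.1.2⟩,
        mem_sigma.2 ⟨z.2.2, mem_filter.2 ⟨z.1.2, z.2.1⟩⟩⟩
      invFun := fun s => ⟨⟨(s.1.1, s.1.2), (mem_filter.1 (mem_sigma.1 s.2).2).1⟩,
        (mem_filter.1 (mem_sigma.1 s.2).2).2, (mem_sigma.1 s.2).1⟩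
      left_inv := fun _ => rfl
      right_inv := fun _ => rfl }

lemma mul_sub_add_one_eq {r q : ℕ} (hr : 0 < r) (hq : 0 < q) :
    r * q - r + 1 = (r - 1) * (q - 1) + q := by
  obtain ⟨r, rfl⟩ := Nat.exists_eq_add_one.2 hr
  obtain ⟨q, rfl⟩ := Nat.exists_eq_add_one.2 hq
  have : (r + 1) * (q + 1) = r * q + r + q + 1 := by ring
  simp only [Nat.add_sub_cancel]
  omega

lemma mul_sub_sub_add_one_eq {r q : ℕ} (hr : 1 < r) (hq : 1 < q) :
    r * q - r - q + 1 = (r - 1) * (q - 1) := by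
  have hpos : 0 < (r - 1) * (q - 1) := Nat.mul_pos (by omega) (by omega)
  have := mul_sub_add_one_eq (Nat.zero_lt_of_lt hr) (Nat.zero_lt_of_lt hq)
  omega

section Transversal

variable {α ι : Type*} [Fintype α] [DecidableEq ι]

/-- The group with label `h` of the partition of the points given by the labelling `grp`. -/
def designGroup (grp : α → ι) (h : ι) : Finset α := {x | grp x = h}

variable {grp : α → ι} {q : ℕ} {g i p x : α} {h : ι} {B : Finset α}

@[simp]
lemma mem_designGroup : x ∈ designGroup grp h ↔ grp x = h := by
  simp [designGroup]

lemma eq_designGroup {G : ι → Finset α} (hdisj : ∀ i j, i ≠ j → Disjoint (G i) (G j))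
    (hgrp : ∀ x, x ∈ G (grp x)) : G = designGroup grp := by
  ext h x
  rw [mem_designGroup]
  refine ⟨fun hx => ?_, fun hx => hx ▸ hgrp x⟩
  by_contra hne
  exact disjoint_left.1 (hdisj _ _ hne) (hgrp x) hx

lemma card_eq_card_mul_of_card_designGroup [Fintype ι]
    (hgroup : ∀ h, #(designGroup grp h) = q) : Fintype.card α = Fintype.card ι * q := by
  rw [← card_univ, card_eq_sum_card_fiberwise (f := grp) (t := univ) fun _ _ => mem_univ _]
  exact (sum_congr rfl fun h _ => hgroup h).trans (by rw [sum_const, card_univ, smul_eq_mul])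

variable [DecidableEq α]

/-- A transversal block of the partition into groups: a set with one point in every group. -/
def IsTransversal (grp : α → ι) (B : Finset α) : Prop :=
  ∀ h, #(B ∩ designGroup grp h) = 1

lemma IsTransversal.bijOn (hB : IsTransversal grp B) : Set.BijOn grp B Set.univ := by
  refine ⟨Set.mapsTo_univ _ _, fun x hx y hy hxy => ?_, fun h _ => ?_⟩
  · exact card_le_one.1 (hB (grp y)).le x (by simpa [hxy] using hx) y (by simpa using hy)
  · obtain ⟨x, hx⟩ := card_pos.1 (hB h ▸ Nat.one_pos)
    exact ⟨x, by simpa using hx⟩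

lemma IsTransversal.card_eq [Fintype ι] (hB : IsTransversal grp B) : #B = Fintype.card ι :=
  Set.BijOn.finsetCard_eq (t := univ) grp (by simpa using hB.bijOn)

/-- A possible part `𝓑_{i,m}` of the transversal blocks through `i`: a set of `q` of them, any two
meeting in `i` only. -/
structure IsPencil (grp : α → ι) (q : ℕ) (i : α) (L : Finset (Finset α)) : Prop where
  card_eq : #L = q
  mem : ∀ B ∈ L, i ∈ B
  isTransversal : ∀ B ∈ L, IsTransversal grp B
  inter_eq : ∀ B ∈ L, ∀ C ∈ L, B ≠ C → B ∩ C = {i}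

lemma IsPencil.eq_of_grp_eq {L : Finset (Finset α)} (hL : IsPencil grp q i L) (hB : B ∈ L)
    (hg : g ∈ B) (hgrp : grp i = grp g) : i = g :=
  (hL.isTransversal B hB).bijOn.injOn (hL.mem B hB) hg hgrp

lemma IsPencil.card_filter_mem_eq_one {L : Finset (Finset α)} (hL : IsPencil grp q i L)
    (hgroup : #(designGroup grp (grp g)) = q) (hg : grp g ≠ grp i) : #{B ∈ L | g ∈ B} = 1 := by
  have hle : ∀ x ∈ designGroup grp (grp g), #{B ∈ L | x ∈ B} ≤ 1 := by
    refine fun x hx => card_le_one.2 fun B hB C hC => ?_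
    rw [mem_filter] at hB hC
    by_contra hne
    have hxi : x ∈ B ∩ C := mem_inter.2 ⟨hB.2, hC.2⟩
    rw [hL.inter_eq B hB.1 C hC.1 hne, mem_singleton] at hxi
    exact hg (hxi ▸ mem_designGroup.1 hx).symm
  have hsum : ∑ x ∈ designGroup grp (grp g), #{B ∈ L | x ∈ B} =
      ∑ x ∈ designGroup grp (grp g), 1 :=
    calc ∑ x ∈ designGroup grp (grp g), #{B ∈ L | x ∈ B}
      _ = ∑ B ∈ L, #{x ∈ designGroup grp (grp g) | x ∈ B} :=
        sum_card_bipartiteAbove_eq_sum_card_bipartiteBelow fun x B => x ∈ B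
      _ = ∑ B ∈ L, 1 := sum_congr rfl fun B hB => by
        rw [filter_mem_eq_inter, inter_comm, hL.isTransversal B hB]
      _ = ∑ x ∈ designGroup grp (grp g), 1 := by
        rw [← card_eq_sum_ones, ← card_eq_sum_ones, hL.card_eq, hgroup]
  exact (sum_eq_sum_iff_of_le hle).1 hsum g (mem_designGroup.2 rfl)

/-- The block set `𝓒_p`: the union of the chosen pencils `L i` over the points `i ≠ p` in the
group of `p`. -/
def pencilUnion (grp : α → ι) (L : α → Finset (Finset α)) (p : α) : Finset (Finset α) :=
  (designGroup grp (grp p) \ {p}).biUnion L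

/-- The vertices of Construction I: the pairs `(p, B)` with `B ∈ 𝓒_p`. -/
abbrev PencilFlag (grp : α → ι) (L : α → Finset (Finset α)) :=
  {x : α × Finset α // x.2 ∈ pencilUnion grp L x.1}

variable {L : α → Finset (Finset α)}

lemma mem_pencilUnion :
    B ∈ pencilUnion grp L p ↔ ∃ i, (grp i = grp p ∧ i ≠ p) ∧ B ∈ L i := by
  simp [pencilUnion]

lemma card_designGroup_sdiff_singleton :
    #(designGroup grp (grp p) \ {p}) = #(designGroup grp (grp p)) - 1 := by
  rw [sdiff_singleton_eq_erase, card_erase_of_mem (mem_designGroup.2 rfl)]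

lemma isTransversal_of_mem_pencilUnion (hL : ∀ i, IsPencil grp q i (L i))
    (hB : B ∈ pencilUnion grp L p) : IsTransversal grp B := by
  obtain ⟨i, -, hBi⟩ := mem_pencilUnion.1 hB
  exact (hL i).isTransversal B hBi

lemma notMem_of_mem_pencilUnion (hL : ∀ i, IsPencil grp q i (L i))
    (hB : B ∈ pencilUnion grp L p) : p ∉ B := by
  obtain ⟨i, ⟨hgrp, hne⟩, hBi⟩ := mem_pencilUnion.1 hB
  exact fun hp => hne ((hL i).eq_of_grp_eq hBi hp hgrp)

lemma pairwiseDisjoint_pencils (hL : ∀ i, IsPencil grp q i (L i)) :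
    (designGroup grp h : Set α).PairwiseDisjoint L := by
  refine fun i hi j hj hij => disjoint_left.2 fun B hBi hBj => hij ?_
  rw [mem_coe, mem_designGroup] at hi hj
  exact (hL i).eq_of_grp_eq hBi ((hL j).mem B hBj) (hi.trans hj.symm)

lemma card_pencilUnion (hgroup : ∀ h, #(designGroup grp h) = q)
    (hL : ∀ i, IsPencil grp q i (L i)) (p : α) : #(pencilUnion grp L p) = (q - 1) * q := by
  rw [pencilUnion, card_biUnion ((pairwiseDisjoint_pencils hL).subset (coe_subset.2 sdiff_subset)),
    sum_congr rfl fun i _ => (hL i).card_eq, sum_const, card_designGroup_sdiff_singleton, hgroup,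
    smul_eq_mul]

lemma card_filter_mem_pencilUnion_self (hL : ∀ i, IsPencil grp q i (L i)) :
    #{B ∈ pencilUnion grp L g | g ∈ B} = 0 :=
  card_eq_zero.2 (filter_false_of_mem fun _ hB => notMem_of_mem_pencilUnion hL hB)

lemma card_filter_mem_pencilUnion_of_grp_eq (hL : ∀ i, IsPencil grp q i (L i))
    (hgrp : grp g = grp p) (hne : g ≠ p) : #{B ∈ pencilUnion grp L p | g ∈ B} = q := by
  have hfilter : {B ∈ pencilUnion grp L p | g ∈ B} = L g := by
    ext B
    rw [mem_filter, mem_pencilUnion]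
    refine ⟨?_, fun hB => ⟨⟨g, ⟨hgrp, hne⟩, hB⟩, (hL g).mem B hB⟩⟩
    rintro ⟨⟨i, ⟨hi, -⟩, hB⟩, hg⟩
    exact (hL i).eq_of_grp_eq hB hg (hi.trans hgrp.symm) ▸ hB
  rw [hfilter, (hL g).card_eq]

lemma card_filter_mem_pencilUnion_of_grp_ne (hgroup : ∀ h, #(designGroup grp h) = q)
    (hL : ∀ i, IsPencil grp q i (L i)) (hgrp : grp g ≠ grp p) :
    #{B ∈ pencilUnion grp L p | g ∈ B} = q - 1 := by
  have hone : ∀ i ∈ designGroup grp (grp p) \ {p}, #{B ∈ L i | g ∈ B} = 1 := fun i hi =>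
    (hL i).card_filter_mem_eq_one (hgroup _)
      (mem_designGroup.1 (sdiff_subset hi) ▸ hgrp)
  have hdisj := (pairwiseDisjoint_pencils hL).subset
    (coe_subset.2 (sdiff_subset (s := designGroup grp (grp p)) (t := {p})))
  rw [pencilUnion, filter_biUnion,
    card_biUnion (hdisj.mono fun _ => filter_subset _ _), sum_congr rfl hone, sum_const,
    card_designGroup_sdiff_singleton, hgroup, smul_eq_mul, mul_one]

lemma sum_designGroup_card_filter_mem (hgroup : ∀ h, #(designGroup grp h) = q)
    (hL : ∀ i, IsPencil grp q i (L i)) (g : α) (h : ι) :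
    ∑ p ∈ designGroup grp h, #{B ∈ pencilUnion grp L p | g ∈ B} = q * (q - 1) := by
  obtain rfl | hne := eq_or_ne (grp g) h
  · have hq : ∀ p ∈ (designGroup grp (grp g)).erase g,
        #{B ∈ pencilUnion grp L p | g ∈ B} = q := fun p hp =>
      card_filter_mem_pencilUnion_of_grp_eq hL
        (mem_designGroup.1 (mem_of_mem_erase hp)).symm (ne_of_mem_erase hp).symm
    rw [← add_sum_erase _ _ (mem_designGroup.2 rfl), card_filter_mem_pencilUnion_self hL,
      sum_congr rfl hq, sum_const, card_erase_of_mem (mem_designGroup.2 rfl), hgroup, zero_add,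
      smul_eq_mul, mul_comm]
  · have hq : ∀ p ∈ designGroup grp h, #{B ∈ pencilUnion grp L p | g ∈ B} = q - 1 := fun p hp =>
      card_filter_mem_pencilUnion_of_grp_ne hgroup hL (mem_designGroup.1 hp ▸ hne)
    rw [sum_congr rfl hq, sum_const, hgroup, smul_eq_mul]

variable [Fintype ι]

lemma IsTransversal.sum_card_filter_mem (hB : IsTransversal grp B)
    (hgroup : ∀ h, #(designGroup grp h) = q) (hL : ∀ i, IsPencil grp q i (L i)) (g : α) :
    ∑ p ∈ B, #{C ∈ pencilUnion grp L p | g ∈ C} =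
      (Fintype.card ι - 1) * (q - 1) + if g ∈ B then 0 else q := by
  obtain ⟨p₀, hp₀, hgrp⟩ := hB.bijOn.surjOn (Set.mem_univ (grp g))
  rw [mem_coe] at hp₀
  have hother : ∀ p ∈ B.erase p₀, #{C ∈ pencilUnion grp L p | g ∈ C} = q - 1 := fun p hp =>
    card_filter_mem_pencilUnion_of_grp_ne hgroup hL fun hgp => ne_of_mem_erase hp
      (hB.bijOn.injOn (mem_of_mem_erase hp) hp₀ (hgp.symm.trans hgrp.symm))
  have hown : #{C ∈ pencilUnion grp L p₀ | g ∈ C} = if g ∈ B then 0 else q := by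
    split_ifs with hg
    · rw [hB.bijOn.injOn hp₀ hg hgrp, card_filter_mem_pencilUnion_self hL]
    · exact card_filter_mem_pencilUnion_of_grp_eq hL hgrp.symm (ne_of_mem_of_not_mem hp₀ hg).symm
  rw [← sum_erase_add _ _ hp₀, hown, sum_congr rfl hother, sum_const, card_erase_of_mem hp₀,
    hB.card_eq, smul_eq_mul]

lemma natCard_pencilFlag (hgroup : ∀ h, #(designGroup grp h) = q)
    (hL : ∀ i, IsPencil grp q i (L i)) :
    Nat.card (PencilFlag grp L) = Fintype.card ι * q ^ 2 * (q - 1) := by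
  have hcount := natCard_flag_subtype (pencilUnion grp L) univ fun _ => True
  simp only [mem_univ, and_self, filter_true, card_pencilUnion hgroup hL, sum_const, card_univ,
    card_eq_card_mul_of_card_designGroup hgroup, smul_eq_mul] at hcount
  rw [← Nat.card_congr (Equiv.subtypeUnivEquiv fun _ => trivial), hcount]
  ring

lemma natCard_pencilFlag_mem_block (hgroup : ∀ h, #(designGroup grp h) = q)
    (hL : ∀ i, IsPencil grp q i (L i)) (g : α) :
    Nat.card {y : PencilFlag grp L // g ∈ y.1.2} = Fintype.card ι * q * (q - 1) := by
  have hcount := natCard_flag_subtype (pencilUnion grp L) univ fun B => g ∈ B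
  simp only [mem_univ, and_true] at hcount
  rw [hcount, ← sum_fiberwise univ grp]
  exact (sum_congr rfl fun h _ => sum_designGroup_card_filter_mem hgroup hL g h).trans
    (by rw [sum_const, card_univ, smul_eq_mul, mul_assoc])

lemma IsTransversal.natCard_pencilFlag_point_mem (hB : IsTransversal grp B)
    (hgroup : ∀ h, #(designGroup grp h) = q) (hL : ∀ i, IsPencil grp q i (L i)) :
    Nat.card {y : PencilFlag grp L // y.1.1 ∈ B} = Fintype.card ι * q * (q - 1) := by
  have hcount := natCard_flag_subtype (pencilUnion grp L) B fun _ => True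
  simp only [true_and, filter_true, card_pencilUnion hgroup hL, sum_const, hB.card_eq,
    smul_eq_mul] at hcount
  rw [hcount]
  ring

lemma IsTransversal.natCard_pencilFlag_between (hB : IsTransversal grp B)
    (hgroup : ∀ h, #(designGroup grp h) = q) (hL : ∀ i, IsPencil grp q i (L i)) (g : α) :
    Nat.card {z : PencilFlag grp L // g ∈ z.1.2 ∧ z.1.1 ∈ B} =
      (Fintype.card ι - 1) * (q - 1) + if g ∈ B then 0 else q :=
  (natCard_flag_subtype _ B fun C => g ∈ C).trans (hB.sum_card_filter_mem hgroup hL g)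

end Transversal

theorem constructionI_a_eq_one_dsrg_general {α : Type} {ι : Type*} [Fintype α] [DecidableEq α]
    [Fintype ι] [DecidableEq ι] {grp : α → ι} {q : ℕ} {L : α → Finset (Finset α)}
    (hgroup : ∀ h, #(designGroup grp h) = q) (hL : ∀ i, IsPencil grp q i (L i)) :
    IsDSRG (V := PencilFlag grp L) (fun x y => x.1.1 ∈ y.1.2)
      (Fintype.card ι * q ^ 2 * (q - 1)) (Fintype.card ι * q * (q - 1))
      ((Fintype.card ι - 1) * (q - 1) + q) ((Fintype.card ι - 1) * (q - 1))
      ((Fintype.card ι - 1) * (q - 1) + q) := by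
  have htrans (x : PencilFlag grp L) : IsTransversal grp x.1.2 :=
    isTransversal_of_mem_pencilUnion hL x.2
  have hloop (x : PencilFlag grp L) : x.1.1 ∉ x.1.2 := notMem_of_mem_pencilUnion hL x.2
  have hpaths (x y : PencilFlag grp L) := (htrans y).natCard_pencilFlag_between hgroup hL x.1.1
  refine ⟨inferInstance, hloop, natCard_pencilFlag hgroup hL,
    fun x => natCard_pencilFlag_mem_block hgroup hL x.1.1,
    fun x => (htrans x).natCard_pencilFlag_point_mem hgroup hL,
    fun x => ?_, fun x y _ hxy => ?_, fun x y _ hxy => ?_⟩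
  · rw [hpaths x x, if_neg (hloop x)]
  · rw [hpaths x y, if_pos hxy, add_zero]
  · rw [hpaths x y, if_neg hxy]

/-- **Construction I with `a = 1`.**  The point set `P` (the finite type `α` of size
`rq`) is partitioned into `r` groups of size `q`.  The transversal blocks are the
`r`-subsets of `P` meeting every group in exactly one point; for each point `i`,
the `q^{r-1}` transversal blocks through `i` are partitioned into `w = q^{r-2}`
parts `Bpart i 1, …, Bpart i w`, each consisting of `q` blocks any two distinct
members of which meet exactly in `{i}`.  Given an injection `π : P → {1, …, w}`,
set `𝓒_g^π = ⋃_{i ∈ G (grp g) \ {g}} Bpart i (π i)`.  The vertices are the pairs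
`(g, B)` with `B ∈ 𝓒_g^π`, and `(g,B) → (g',B')` iff `g ∈ B'`.  This directed
graph is a DSRG with parameters
`(rq²(q−1), rq(q−1), rq − r + 1, rq − r − q + 1, rq − r + 1)`. -/
theorem constructionI_a_eq_one_dsrg
    {α : Type} [Fintype α] [DecidableEq α]
    (r q : ℕ) (hr : 1 < r) (hq : 1 < q) (hrq : r ≤ q ^ (r - 3))
    (G : Fin r → Finset α)
    (hGdisj : ∀ i j : Fin r, i ≠ j → Disjoint (G i) (G j))
    (hGcard : ∀ i : Fin r, (G i).card = q)
    (grp : α → Fin r) (hgrp : ∀ x : α, x ∈ G (grp x))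
    (Bpart : α → Fin (q ^ (r - 2)) → Finset (Finset α))
    (hBtrans : ∀ (i : α) (m : Fin (q ^ (r - 2))), ∀ B ∈ Bpart i m,
      i ∈ B ∧ ∀ h : Fin r, (B ∩ G h).card = 1)
    (hBq : ∀ (i : α) (m : Fin (q ^ (r - 2))), (Bpart i m).card = q)
    (hBdisj : ∀ (i : α) (m m' : Fin (q ^ (r - 2))), m ≠ m' →
      Disjoint (Bpart i m) (Bpart i m'))
    (hBcover : ∀ (i : α) (B : Finset α), i ∈ B → (∀ h : Fin r, (B ∩ G h).card = 1) →
      ∃ m : Fin (q ^ (r - 2)), B ∈ Bpart i m)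
    (hBint : ∀ (i : α) (m : Fin (q ^ (r - 2))), ∀ B ∈ Bpart i m, ∀ C ∈ Bpart i m,
      B ≠ C → B ∩ C = {i})
    (π : α → Fin (q ^ (r - 2))) (hπ : Function.Injective π) :
    IsDSRG
      (V := {x : α × Finset α //
        x.2 ∈ (G (grp x.1) \ {x.1}).biUnion fun i => Bpart i (π i)})
      (fun x y => x.1.1 ∈ y.1.2)
      (r * q ^ 2 * (q - 1)) (r * q * (q - 1)) (r * q - r + 1)
      (r * q - r - q + 1) (r * q - r + 1) := by
  obtain rfl := eq_designGroup hGdisj hgrp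
  have hL (i : α) : IsPencil grp q i (Bpart i (π i)) :=
    ⟨hBq i _, fun B hB => (hBtrans i _ B hB).1, fun B hB => (hBtrans i _ B hB).2, hBint i _⟩
  have hdsrg := constructionI_a_eq_one_dsrg_general hGcard hL
  rw [Fintype.card_fin] at hdsrg
  rwa [mul_sub_sub_add_one_eq hr hq, mul_sub_add_one_eq (by omega) (by omega)]
end

section
/- Construction II, first graph. Let D₁ be the directed graph on the vertex set V = {(g, B) : g ∈ P, B ∈ 𝓑_g}, with adjacency (g, B) → (g′, B′) if and only if g ∈ B′. Then D₁ is a directed strongly regular graph with parameters (v, k, t, λ, μ) = (ns, ls, ld, (l−1)d, ld). -/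
/-!
Out-degrees, mutual neighbours and paths of length two are all counted by the vertices `(h, C)`
with `h ∈ S` and `g ∈ C`, for a suitable point `g` and set of points `S`. A base point `h ≠ g` has
`d` such blocks `C` and `h = g` has none, so the count is `|S \ {g}| * d`. For paths from `(g, B)`
to `(g', B')` one has `S = B'`, and `(g, B) → (g', B')` says exactly that `g ∈ B'`; this is why `λ`
has the factor `l - 1` and `μ` the factor `l`.
-/

open Finset

section Fibers

variable {V α : Type*} [Finite V]

theorem natCard_mem_and_eq_card_mul (f : V → α) (p : V → Prop) (S : Finset α) (m : ℕ)
    (hfiber : ∀ i ∈ S, Nat.card {z // f z = i ∧ p z} = m) :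
    Nat.card {z // f z ∈ S ∧ p z} = #S * m := by
  classical
  have := Fintype.ofFinite V
  simp only [Nat.card_eq_fintype_card, Fintype.card_subtype] at hfiber ⊢
  have hmaps : ∀ z ∈ univ.filter fun z => f z ∈ S ∧ p z, f z ∈ S :=
    fun z hz => (mem_filter.mp hz).2.1
  rw [card_eq_sum_card_fiberwise hmaps]
  refine sum_const_nat fun i hi => ?_
  rw [← hfiber i hi, filter_filter]
  congr 1 with z
  grind

theorem natCard_mem_eq_card_mul (f : V → α) (S : Finset α) (m : ℕ)
    (hfiber : ∀ i ∈ S, Nat.card {z // f z = i} = m) : Nat.card {z // f z ∈ S} = #S * m := by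
  simpa using natCard_mem_and_eq_card_mul f (fun _ => True) S m (by simpa using hfiber)

theorem natCard_eq_card_mul [Fintype α] (f : V → α) (m : ℕ)
    (hfiber : ∀ i, Nat.card {z // f z = i} = m) : Nat.card V = Fintype.card α * m := by
  simpa using natCard_mem_eq_card_mul f univ m fun i _ => hfiber i

theorem natCard_pt_mem_and_mem_blk [DecidableEq α] {pt : V → α} {blk : V → Finset α} {d : ℕ}
    (hpt : ∀ z, pt z ∉ blk z)
    (hreg : ∀ i x, x ≠ i → Nat.card {z // pt z = i ∧ x ∈ blk z} = d) (S : Finset α) (g : α) :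
    Nat.card {z // pt z ∈ S ∧ g ∈ blk z} = #(S.erase g) * d := by
  have hiff (z : V) : pt z ∈ S ∧ g ∈ blk z ↔ pt z ∈ S.erase g ∧ g ∈ blk z := by
    have hne : g ∈ blk z → pt z ≠ g := fun hg heq => hpt z (heq.symm ▸ hg)
    rw [mem_erase]
    tauto
  rw [Nat.card_congr (Equiv.subtypeEquivRight hiff)]
  exact natCard_mem_and_eq_card_mul pt _ _ d fun i hi => hreg i g (ne_of_mem_erase hi).symm

end Fibers

/-- The blocks are indexed by the vertices, `blk z` being based at `pt z`, so a block may be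
repeated at its base point. -/
theorem constructionII_D1_dsrg_general {V : Type} {α : Type*} [Finite V] [Fintype α] {d l s : ℕ}
    (hdn : d * (Fintype.card α - 1) = l * s) (pt : V → α) (blk : V → Finset α)
    (hpt : ∀ z, pt z ∉ blk z) (hblk : ∀ z, #(blk z) = l)
    (hfiber : ∀ i, Nat.card {z // pt z = i} = s)
    (hreg : ∀ i x, x ≠ i → Nat.card {z // pt z = i ∧ x ∈ blk z} = d) :
    IsDSRG (fun x y => pt x ∈ blk y)
      (Fintype.card α * s) (l * s) (l * d) ((l - 1) * d) (l * d) := by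
  classical
  have hout (x : V) : Nat.card {y // pt x ∈ blk y} = #(univ.erase (pt x)) * d := by
    simpa only [mem_univ, true_and] using natCard_pt_mem_and_mem_blk hpt hreg univ (pt x)
  have hpaths (x y : V) :
      Nat.card {z // pt x ∈ blk z ∧ pt z ∈ blk y} = #((blk y).erase (pt x)) * d := by
    simpa only [and_comm] using natCard_pt_mem_and_mem_blk hpt hreg (blk y) (pt x)
  refine ⟨inferInstance, hpt, natCard_eq_card_mul pt s hfiber, fun x => ?out_degree,
    fun x => ?in_degree, fun x => ?mutual_degree, fun x y _ hxy => ?paths_of_adj,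
    fun x y _ hxy => ?paths_of_not_adj⟩
  case out_degree => rw [hout, card_erase_of_mem (mem_univ _), card_univ, mul_comm, hdn]
  case in_degree => rw [natCard_mem_eq_card_mul pt (blk x) s fun i _ => hfiber i, hblk]
  case mutual_degree => rw [hpaths, erase_eq_of_notMem (hpt x), hblk]
  case paths_of_adj => rw [hpaths, card_erase_of_mem hxy, hblk]
  case paths_of_not_adj => rw [hpaths, erase_eq_of_notMem hxy, hblk]

section DependentPairs

variable {α β : Type*} (𝓑 : α → Finset β) (i : α)

theorem natCard_fst_eq_and_snd (p : β → Prop) [DecidablePred p] :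
    Nat.card {z : {x : α × β // x.2 ∈ 𝓑 x.1} // z.1.1 = i ∧ p z.1.2} = #{B ∈ 𝓑 i | p B} := by
  rw [← Nat.card_eq_finsetCard]
  exact Nat.card_congr
    { toFun z := ⟨z.1.1.2, mem_filter.mpr ⟨by simpa only [z.2.1] using z.1.2, z.2.2⟩⟩
      invFun B := ⟨⟨(i, B), (mem_filter.mp B.2).1⟩, rfl, (mem_filter.mp B.2).2⟩
      left_inv := by rintro ⟨⟨⟨_, _⟩, _⟩, rfl, _⟩; rfl
      right_inv _ := rfl }

theorem natCard_fst_eq : Nat.card {z : {x : α × β // x.2 ∈ 𝓑 x.1} // z.1.1 = i} = #(𝓑 i) := by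
  simpa using natCard_fst_eq_and_snd 𝓑 i fun _ => True

end DependentPairs

/-- **Construction II, first graph `D₁`.**  Let `n, d, l, s` be positive integers
with `d(n−1) = ls`.  The point set `P` is the finite type `α` with `n` elements;
for each `i ∈ P`, `𝓑 i` is a family of `s` distinct blocks, each an `l`-element
subset of `P \ {i}`, such that every point of `P \ {i}` lies in exactly `d` blocks
of `𝓑 i`.  The vertices are the pairs `(g, B)` with `B ∈ 𝓑 g`, and
`(g,B) → (g',B')` iff `g ∈ B'`.  This directed graph is a DSRG with parameters
`(ns, ls, ld, (l−1)d, ld)`. -/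
theorem constructionII_D1_dsrg
    {α : Type} [Fintype α] [DecidableEq α]
    (n d l s : ℕ) (hn : 0 < n) (hd : 0 < d) (hl : 0 < l) (hs : 0 < s)
    (hdn : d * (n - 1) = l * s)
    (hcard : Fintype.card α = n)
    (𝓑 : α → Finset (Finset α))
    (hBs : ∀ i : α, (𝓑 i).card = s)
    (hBl : ∀ i : α, ∀ B ∈ 𝓑 i, i ∉ B ∧ B.card = l)
    (hBreg : ∀ i x : α, x ≠ i → ((𝓑 i).filter (fun B => x ∈ B)).card = d) :
    IsDSRG (V := {x : α × Finset α // x.2 ∈ 𝓑 x.1})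
      (fun x y => x.1.1 ∈ y.1.2)
      (n * s) (l * s) (l * d) ((l - 1) * d) (l * d) := by
  subst hcard
  exact constructionII_D1_dsrg_general (V := {x : α × Finset α // x.2 ∈ 𝓑 x.1}) hdn
    (·.1.1) (·.1.2) (fun z => (hBl _ _ z.2).1) (fun z => (hBl _ _ z.2).2)
    (fun i => (natCard_fst_eq 𝓑 i).trans (hBs i))
    (fun i x hx => (natCard_fst_eq_and_snd 𝓑 i (x ∈ ·)).trans (hBreg i x hx))
end

section
/- Construction II, second graph. Let D₂ be the directed graph on the vertex set V = {(g, B) : g ∈ P, B ∈ 𝓑_g}, with adjacency (g, B) → (g′, B′) if and only if either g ∈ B′, or g = g′ and B ≠ B′. Then D₂ is a directed strongly regular graph with parameters (v, k, t, λ, μ) = (ns, ls + s − 1, ld + s − 1, ld + s − 2, (l+1)d). -/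
/-
Write `x = (g, B)` and attach to each vertex the closed block `insert g B`. Then `x → y` or
`x = y` exactly when the point of `x` lies in the closed block of `y`, so the adjacency matrix `A`
satisfies `A + 1 = P * N`, where `P` is the vertex-point incidence matrix and `N` is the
incidence matrix of points in closed blocks. With `J` the all-ones matrix, the design axioms say
that `N * P = d • J + (s - d) • 1`, and closed blocks have size `l + 1`, so
`(A + 1) ^ 2 = P * (N * P) * N = ((l + 1) * d) • J + (s - d) • (A + 1)`.
Expanding the square reads off `t`, `λ` and `μ` at once.
-/

open Finset Matrix

section Matrix

variable {m n R : Type*} [Fintype m] [Fintype n] [CommSemiring R] {P : Matrix m n R}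
  {N : Matrix n m R}

lemma mul_mul_self_of_mul_eq_smul_vecMulVec_one_add [DecidableEq n] {a b c : R}
    (hP : P *ᵥ 1 = 1) (hN : 1 ᵥ* N = c • 1) (hNP : N * P = a • vecMulVec 1 1 + b • 1) :
    P * N * (P * N) = (c * a) • vecMulVec 1 1 + b • (P * N) := calc
  P * N * (P * N) = P * (N * P) * N := by simp only [Matrix.mul_assoc]
  _ = a • vecMulVec (P *ᵥ 1) (1 ᵥ* N) + b • (P * N) := by
    rw [hNP]
    simp only [Matrix.mul_add, Matrix.add_mul, Matrix.mul_smul, Matrix.smul_mul, Matrix.mul_one,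
      mul_vecMulVec, vecMulVec_mul]
  _ = (c * a) • vecMulVec 1 1 + b • (P * N) := by
    rw [hP, hN, vecMulVec_smul, smul_smul, mul_comm a]

-- The row sums of `N` are those of `N * P`, which by symmetry are its column sums.
lemma mul_mulVec_one_of_isSymm {c s : R} (hP : P *ᵥ 1 = 1) (hP' : 1 ᵥ* P = s • 1)
    (hN : 1 ᵥ* N = c • 1) (hNP : (N * P).IsSymm) :
    (P * N) *ᵥ 1 = (c * s) • 1 := by
  have rowSum_eq : N *ᵥ 1 = (c * s) • 1 := calc
    N *ᵥ 1 = (N * P) *ᵥ 1 := by rw [← mulVec_mulVec, hP]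
    _ = 1 ᵥ* (N * P) := by rw [← vecMul_transpose, hNP.eq]
    _ = (c * s) • 1 := by rw [← vecMul_vecMul, hN, smul_vecMul, hP', smul_smul]
  rw [← mulVec_mulVec, rowSum_eq, mulVec_smul, hP]

end Matrix

section RelMatrix

variable {X Y Z : Type*}

/-- The 0-1 matrix over `ℤ` of a relation. It serves both as the adjacency matrix of a digraph and
as the incidence matrix between points, vertices and blocks. -/
def relMatrix (r : X → Y → Prop) [DecidableRel r] : Matrix X Y ℤ :=
  .of fun x y => if r x y then 1 else 0

variable (r : X → Y → Prop) [DecidableRel r] (q : Y → Z → Prop) [DecidableRel q]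

lemma relMatrix_apply (x : X) (y : Y) : relMatrix r x y = if r x y then 1 else 0 := rfl

lemma relMatrix_mulVec_one_apply [Fintype Y] (x : X) : (relMatrix r *ᵥ 1) x = #{y | r x y} := by
  simp [mulVec, dotProduct, relMatrix_apply]

lemma one_vecMul_relMatrix_apply [Fintype X] (y : Y) : (1 ᵥ* relMatrix r) y = #{x | r x y} := by
  simp [vecMul, dotProduct, relMatrix_apply]

lemma relMatrix_mul_relMatrix_apply [Fintype Y] (x : X) (z : Z) :
    (relMatrix r * relMatrix q) x z = #{y | r x y ∧ q y z} := by
  simp [mul_apply, relMatrix_apply, ← ite_and, and_comm]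

end RelMatrix

lemma isDSRG_of_relMatrix {V : Type} [Fintype V] [DecidableEq V] {Adj : V → V → Prop}
    [DecidableRel Adj] {k t lam mu : ℕ} (hloop : ∀ x, ¬ Adj x x)
    (hout : relMatrix Adj *ᵥ 1 = (k : ℤ) • 1) (hin : 1 ᵥ* relMatrix Adj = (k : ℤ) • 1)
    (hsq : relMatrix Adj * relMatrix Adj = (t : ℤ) • 1 + (lam : ℤ) • relMatrix Adj +
      (mu : ℤ) • (vecMulVec 1 1 - 1 - relMatrix Adj)) :
    IsDSRG Adj (Fintype.card V) k t lam mu := by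
  have card_paths (x y : V) : (Nat.card {z // Adj x z ∧ Adj z y} : ℤ) =
      t * (if x = y then 1 else 0) + lam * (if Adj x y then 1 else 0) +
        mu * (1 - (if x = y then 1 else 0) - if Adj x y then 1 else 0) := by
    have h := congrFun₂ hsq x y
    rw [relMatrix_mul_relMatrix_apply] at h
    simpa only [relMatrix_apply, Matrix.add_apply, Matrix.sub_apply, Matrix.smul_apply, one_apply,
      vecMulVec_apply, Pi.one_apply, mul_one, smul_eq_mul, Nat.card_eq_fintype_card,
      Fintype.card_subtype] using h
  refine ⟨inferInstance, hloop, Nat.card_eq_fintype_card, fun x => ?_, fun x => ?_, fun x => ?_,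
    fun x y hxy hadj => ?_, fun x y hxy hadj => ?_⟩ <;> zify
  · simpa [relMatrix_mulVec_one_apply, Fintype.card_subtype] using congrFun hout x
  · simpa [one_vecMul_relMatrix_apply, Fintype.card_subtype] using congrFun hin x
  · simpa [hloop x] using card_paths x x
  · simpa [hxy, hadj] using card_paths x y
  · simpa [hxy, hadj] using card_paths x y

/-- A family of pairs `(point x, block x)`, indexed by `x : V`, such that for each point `i` the
`s` blocks attached to `i` have size `l`, avoid `i`, and cover every other point `d` times. Indexing
by an arbitrary type allows the same block to be attached to `i` several times. -/
structure IsPointedDesign {V α : Type*} [Fintype V] [DecidableEq α] (point : V → α)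
    (block : V → Finset α) (d l s : ℕ) : Prop where
  card_fiber (i : α) : #{x | point x = i} = s
  point_notMem_block (x : V) : point x ∉ block x
  card_block (x : V) : #(block x) = l
  card_fiber_through (i j : α) : j ≠ i → #{x | point x = i ∧ j ∈ block x} = d

namespace IsPointedDesign

variable {V α : Type*} [DecidableEq α]

/-- The vertex-point incidence matrix: row `x` is the indicator of `point x`. -/
def pointMatrix (point : V → α) : Matrix V α ℤ :=
  relMatrix fun x i => point x = i

/-- The incidence matrix of points in closed blocks: column `x` is the indicator of
`insert (point x) (block x)`. -/
def closedBlockMatrix (point : V → α) (block : V → Finset α) : Matrix α V ℤ :=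
  relMatrix fun i x => i ∈ insert (point x) (block x)

lemma pointMatrix_mulVec_one [Fintype α] (point : V → α) : pointMatrix point *ᵥ 1 = 1 := by
  ext x
  simp [pointMatrix, relMatrix_mulVec_one_apply, filter_eq]

lemma pointMatrix_mul_apply [Fintype α] {W : Type*} (point : V → α) (M : Matrix α W ℤ) (x : V)
    (w : W) : (pointMatrix point * M) x w = M (point x) w := by
  simp [mul_apply, pointMatrix, relMatrix_apply]

variable [Fintype V] {point : V → α} {block : V → Finset α} {d l s : ℕ}

lemma one_vecMul_pointMatrix (h : IsPointedDesign point block d l s) :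
    1 ᵥ* pointMatrix point = (s : ℤ) • 1 := by
  ext i
  simp [pointMatrix, one_vecMul_relMatrix_apply, h.card_fiber]

lemma one_vecMul_closedBlockMatrix [Fintype α] (h : IsPointedDesign point block d l s) :
    1 ᵥ* closedBlockMatrix point block = ((l + 1 : ℕ) : ℤ) • 1 := by
  ext x
  rw [closedBlockMatrix, one_vecMul_relMatrix_apply, filter_univ_mem,
    card_insert_of_notMem (h.point_notMem_block x), h.card_block]
  simp

lemma closedBlockMatrix_mul_pointMatrix (h : IsPointedDesign point block d l s) :
    closedBlockMatrix point block * pointMatrix point =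
      (d : ℤ) • vecMulVec 1 1 + (s - d : ℤ) • 1 := by
  ext j i
  rw [closedBlockMatrix, pointMatrix, relMatrix_mul_relMatrix_apply, Matrix.add_apply,
    Matrix.smul_apply, Matrix.smul_apply, vecMulVec_apply, one_apply]
  obtain rfl | hji := eq_or_ne j i
  · have hcount : #{x | j ∈ insert (point x) (block x) ∧ point x = j} = s := by
      rw [← h.card_fiber j]
      congr 1
      grind
    rw [hcount]
    simp
  · have hcount : #{x | j ∈ insert (point x) (block x) ∧ point x = i} = d := by
      rw [← h.card_fiber_through i j hji]
      congr 1
      grind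
    rw [hcount]
    simp [hji]

lemma isSymm_closedBlockMatrix_mul_pointMatrix (h : IsPointedDesign point block d l s) :
    (closedBlockMatrix point block * pointMatrix point).IsSymm := by
  simp only [IsSymm, h.closedBlockMatrix_mul_pointMatrix, transpose_add, transpose_smul,
    transpose_vecMulVec, transpose_one]

lemma card_eq_card_mul [Fintype α] (h : IsPointedDesign point block d l s) :
    Fintype.card V = Fintype.card α * s := by
  have hsum := card_eq_sum_card_fiberwise (s := univ) (t := univ) (f := point) fun _ _ => mem_univ _
  simpa [h.card_fiber] using hsum

lemma relMatrix_adj_eq [Fintype α] [DecidableEq V] (h : IsPointedDesign point block d l s) :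
    relMatrix (fun x y => point x ∈ block y ∨ (point x = point y ∧ x ≠ y)) =
      pointMatrix point * closedBlockMatrix point block - 1 := by
  ext x y
  rw [Matrix.sub_apply, pointMatrix_mul_apply, closedBlockMatrix, relMatrix_apply, relMatrix_apply,
    one_apply]
  obtain rfl | hxy := eq_or_ne x y
  · simp [h.point_notMem_block x]
  · simp [hxy, or_comm]

end IsPointedDesign

theorem constructionII_D2_dsrg_general {V : Type} {α : Type*} [Fintype V] [Fintype α]
    [DecidableEq α] {point : V → α} {block : V → Finset α} {d l s : ℕ}
    (hd : 0 < d) (hl : 0 < l) (hs : 0 < s) (h : IsPointedDesign point block d l s) :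
    IsDSRG (fun x y => point x ∈ block y ∨ (point x = point y ∧ x ≠ y))
      (Fintype.card α * s) (l * s + s - 1) (l * d + s - 1) (l * d + s - 2) ((l + 1) * d) := by
  classical
  have cast_k : ((l * s + s - 1 : ℕ) : ℤ) = (l + 1 : ℕ) * s - 1 := by grind
  have cast_t : ((l * d + s - 1 : ℕ) : ℤ) = l * d + s - 1 := by grind
  have cast_lam : ((l * d + s - 2 : ℕ) : ℤ) = l * d + s - 2 := by
    have := Nat.mul_pos hl hd
    grind
  have hP := IsPointedDesign.pointMatrix_mulVec_one point
  rw [← h.card_eq_card_mul]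
  apply isDSRG_of_relMatrix
  · simp [h.point_notMem_block]
  · rw [h.relMatrix_adj_eq, sub_mulVec, one_mulVec, mul_mulVec_one_of_isSymm hP
      h.one_vecMul_pointMatrix h.one_vecMul_closedBlockMatrix
      h.isSymm_closedBlockMatrix_mul_pointMatrix, cast_k]
    module
  · rw [h.relMatrix_adj_eq, vecMul_sub, vecMul_one, ← vecMul_vecMul, h.one_vecMul_pointMatrix,
      smul_vecMul, h.one_vecMul_closedBlockMatrix, cast_k]
    module
  · have sq := mul_mul_self_of_mul_eq_smul_vecMulVec_one_add hP h.one_vecMul_closedBlockMatrix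
      h.closedBlockMatrix_mul_pointMatrix
    rw [h.relMatrix_adj_eq, sub_mul, mul_sub, sq, cast_t, cast_lam]
    simp only [mul_one, one_mul]
    push_cast
    module

section Flags

variable {α : Type*} [Fintype α] [DecidableEq α] {𝓑 : α → Finset (Finset α)}

lemma card_flags_filter (i : α) (q : Finset α → Prop) [DecidablePred q] :
    #{x : {x : α × Finset α // x.2 ∈ 𝓑 x.1} | x.1.1 = i ∧ q x.1.2} = #{B ∈ 𝓑 i | q B} := by
  refine card_bij (fun x _ => x.1.2) (by grind) (by grind) fun B hB => ?_
  obtain ⟨hBi, hqB⟩ := mem_filter.1 hB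
  exact ⟨⟨(i, B), hBi⟩, by simpa using hqB, rfl⟩

lemma isPointedDesign_flags {d l s : ℕ} (hBs : ∀ i, #(𝓑 i) = s)
    (hBl : ∀ i, ∀ B ∈ 𝓑 i, i ∉ B ∧ #B = l) (hBreg : ∀ i x, x ≠ i → #{B ∈ 𝓑 i | x ∈ B} = d) :
    IsPointedDesign (V := {x : α × Finset α // x.2 ∈ 𝓑 x.1}) (·.1.1) (·.1.2) d l s where
  card_fiber i := by simpa [hBs] using card_flags_filter (𝓑 := 𝓑) i fun _ => True
  point_notMem_block x := (hBl _ _ x.2).1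
  card_block x := (hBl _ _ x.2).2
  card_fiber_through i j hji := (card_flags_filter i (j ∈ ·)).trans (hBreg i j hji)

end Flags

/-- **Construction II, second graph `D₂`.**  Let `n, d, l, s` be positive integers
with `d(n−1) = ls`.  The point set `P` is the finite type `α` with `n` elements;
for each `i ∈ P`, `𝓑 i` is a family of `s` distinct blocks, each an `l`-element
subset of `P \ {i}`, such that every point of `P \ {i}` lies in exactly `d` blocks
of `𝓑 i`.  The vertices are the pairs `(g, B)` with `B ∈ 𝓑 g`, and
`(g,B) → (g',B')` iff `g ∈ B'`, or `g = g'` and `B ≠ B'`.  This directed graph is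
a DSRG with parameters `(ns, ls + s − 1, ld + s − 1, ld + s − 2, (l+1)d)`. -/
theorem constructionII_D2_dsrg
    {α : Type} [Fintype α] [DecidableEq α]
    (n d l s : ℕ) (hn : 0 < n) (hd : 0 < d) (hl : 0 < l) (hs : 0 < s)
    (hdn : d * (n - 1) = l * s)
    (hcard : Fintype.card α = n)
    (𝓑 : α → Finset (Finset α))
    (hBs : ∀ i : α, (𝓑 i).card = s)
    (hBl : ∀ i : α, ∀ B ∈ 𝓑 i, i ∉ B ∧ B.card = l)
    (hBreg : ∀ i x : α, x ≠ i → ((𝓑 i).filter (fun B => x ∈ B)).card = d) :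
    IsDSRG (V := {x : α × Finset α // x.2 ∈ 𝓑 x.1})
      (fun x y => x.1.1 ∈ y.1.2 ∨ (x.1.1 = y.1.1 ∧ x.1.2 ≠ y.1.2))
      (n * s) (l * s + s - 1) (l * d + s - 1) (l * d + s - 2) ((l + 1) * d) := by
  have same_point_ne_iff (x y : {x : α × Finset α // x.2 ∈ 𝓑 x.1}) :
      x.1.1 = y.1.1 ∧ x.1.2 ≠ y.1.2 ↔ x.1.1 = y.1.1 ∧ x ≠ y := by grind
  simpa only [same_point_ne_iff, hcard] using
    constructionII_D2_dsrg_general hd hl hs (isPointedDesign_flags hBs hBl hBreg)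
end

section
/- Construction II with d = 1, first graph. Let D₁ be the directed graph on the vertex set V = {(i, B) : i ∈ P, B ∈ 𝓑_i}, with adjacency (i, B) → (j, B′) if and only if i ∈ B′. Then D₁ is a directed strongly regular graph with parameters (v, k, t, λ, μ) = (ls² + s, ls, l, l − 1, l). -/
/-!
A walk `(i, A) → (j, B) → (k, C)` means `i ∈ B` and `j ∈ C`. For each `j ≠ i` exactly one block
`B ∈ 𝓑 j` contains `i`, so the vertices `(j, B)` with `i ∈ B` correspond to the points `j ≠ i`, and
the walks of length two from `(i, A)` to `(k, C)` to the points of `C \ {i}`. Since `i ∈ C` is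
adjacency itself, this number drops from `l` to `l - 1` exactly on the arcs.
-/

/-- The vertices `(i, B)` of the construction: a point together with one of the blocks assigned to
it. Blocks may be of any type `β`; only the incidence results take them to be sets of points. -/
abbrev PointedBlock {α β : Type*} (𝓑 : α → Finset β) : Type _ :=
  {x : α × β // x.2 ∈ 𝓑 x.1}

/-- `𝓟` is a partition of all points other than `i`. Empty blocks are allowed. -/
structure IsPuncturedPartition {α : Type*} (i : α) (𝓟 : Finset (Finset α)) : Prop where
  notMem : ∀ B ∈ 𝓟, i ∉ B
  existsUnique : ∀ x, x ≠ i → ∃! B, B ∈ 𝓟 ∧ x ∈ B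

namespace PointedBlock

theorem card_fst_mem {α β : Type*} (𝓑 : α → Finset β) (S : Finset α) :
    Nat.card {y : PointedBlock 𝓑 // y.1.1 ∈ S} = ∑ i ∈ S, (𝓑 i).card := by
  let e : {y : PointedBlock 𝓑 // y.1.1 ∈ S} ≃ S.sigma 𝓑 :=
    { toFun y := ⟨⟨y.1.1.1, y.1.1.2⟩, Finset.mem_sigma.2 ⟨y.2, y.1.2⟩⟩
      invFun z := ⟨⟨(z.1.1, z.1.2), (Finset.mem_sigma.1 z.2).2⟩, (Finset.mem_sigma.1 z.2).1⟩ }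
  rw [Nat.card_congr e, Nat.card_eq_finsetCard, Finset.card_sigma]

theorem card_eq_sum {α β : Type*} [Fintype α] (𝓑 : α → Finset β) :
    Nat.card (PointedBlock 𝓑) = ∑ i, (𝓑 i).card := by
  rw [← card_fst_mem]
  exact Nat.card_congr (Equiv.subtypeUnivEquiv fun _ ↦ Finset.mem_univ _).symm

section Incidence

variable {α : Type*} {𝓑 : α → Finset (Finset α)}

theorem bijOn_fst_mem_snd (h𝓑 : ∀ i, IsPuncturedPartition i (𝓑 i)) (i : α) :
    Set.BijOn (fun y : PointedBlock 𝓑 ↦ y.1.1) {y | i ∈ y.1.2} {i}ᶜ := by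
  have fst_ne (y : PointedBlock 𝓑) (hy : i ∈ y.1.2) : y.1.1 ≠ i := by
    rintro rfl
    exact (h𝓑 _).notMem _ y.2 hy
  refine ⟨fst_ne, ?_, ?_⟩
  · rintro ⟨⟨j, B⟩, hB⟩ hiB ⟨⟨_, B'⟩, hB'⟩ hiB' rfl
    obtain rfl : B = B' :=
      ((h𝓑 j).existsUnique i (fst_ne _ hiB).symm).unique ⟨hB, hiB⟩ ⟨hB', hiB'⟩
    rfl
  · intro j hj
    obtain ⟨B, ⟨hB, hiB⟩, -⟩ := (h𝓑 j).existsUnique i (Ne.symm hj)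
    exact ⟨⟨(j, B), hB⟩, hiB, rfl⟩

theorem card_mem_snd_and_fst_mem [DecidableEq α] (h𝓑 : ∀ i, IsPuncturedPartition i (𝓑 i)) (i : α)
    (S : Finset α) :
    Nat.card {y : PointedBlock 𝓑 // i ∈ y.1.2 ∧ y.1.1 ∈ S} = (S.erase i).card := by
  have bij := (bijOn_fst_mem_snd h𝓑 i).inter_mapsTo
    (Set.mapsTo_preimage _ (S : Set α)) Set.inter_subset_right
  have target : ({i}ᶜ ∩ S : Set α) = S.erase i := by
    rw [Finset.coe_erase, Set.inter_comm, Set.sdiff_eq]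
  rw [target] at bij
  exact (Nat.card_congr bij.equiv).trans (Nat.card_eq_finsetCard _)

theorem card_mem_snd [Fintype α] (h𝓑 : ∀ i, IsPuncturedPartition i (𝓑 i)) (i : α) :
    Nat.card {y : PointedBlock 𝓑 // i ∈ y.1.2} = Fintype.card α - 1 := by
  classical
  simpa using card_mem_snd_and_fst_mem h𝓑 i Finset.univ

end Incidence

end PointedBlock

/-- **Construction II with `d = 1`, first graph `D₁`.**  Let `l, s` be positive
integers and let `P` be the finite type `α` with `ls + 1` elements; for each
`i ∈ P`, `𝓑 i` is a partition of `P \ {i}` into `s` blocks of size `l`.  The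
vertices are the pairs `(i, B)` with `B ∈ 𝓑 i`, and `(i,B) → (j,B')` iff
`i ∈ B'`.  This directed graph is a DSRG with parameters
`(ls² + s, ls, l, l − 1, l)`. -/
theorem constructionII_d_eq_one_D1_dsrg
    {α : Type} [Fintype α] [DecidableEq α]
    (l s : ℕ) (hl : 0 < l) (hs : 0 < s)
    (hcard : Fintype.card α = l * s + 1)
    (𝓑 : α → Finset (Finset α))
    (hBs : ∀ i : α, (𝓑 i).card = s)
    (hBl : ∀ i : α, ∀ B ∈ 𝓑 i, i ∉ B ∧ B.card = l)
    (hBpart : ∀ i x : α, x ≠ i → ∃! B, B ∈ 𝓑 i ∧ x ∈ B) :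
    IsDSRG (V := {x : α × Finset α // x.2 ∈ 𝓑 x.1})
      (fun x y => x.1.1 ∈ y.1.2)
      (l * s ^ 2 + s) (l * s) l (l - 1) l := by
  have h𝓑 (i : α) : IsPuncturedPartition i (𝓑 i) := ⟨fun B hB ↦ (hBl i B hB).1, hBpart i⟩
  have walks (i : α) (S : Finset α) := PointedBlock.card_mem_snd_and_fst_mem h𝓑 i S
  refine ⟨inferInstance, fun x ↦ (hBl _ _ x.2).1, ?order, fun x ↦ ?outdegree, fun x ↦ ?indegree,
    fun x ↦ ?reciprocal, fun x y _ hxy ↦ ?adjacent, fun x y _ hxy ↦ ?nonadjacent⟩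
  case order =>
    rw [PointedBlock.card_eq_sum, Finset.sum_const_nat fun i _ ↦ hBs i, Finset.card_univ, hcard]
    ring
  case outdegree => rw [PointedBlock.card_mem_snd h𝓑, hcard, Nat.add_sub_cancel]
  case indegree =>
    rw [PointedBlock.card_fst_mem, Finset.sum_const_nat fun i _ ↦ hBs i, (hBl _ _ x.2).2]
  case reciprocal =>
    rw [walks, Finset.erase_eq_of_notMem (hBl _ _ x.2).1, (hBl _ _ x.2).2]
  case adjacent => rw [walks, Finset.card_erase_of_mem hxy, (hBl _ _ y.2).2]
  case nonadjacent => rw [walks, Finset.erase_eq_of_notMem hxy, (hBl _ _ y.2).2]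
end

section
/- Let r, a, b be integers greater than 1 and set q = 1 + ab. Then for every positive integer m there exists a directed strongly regular graph with parameters (v, k, t, λ, μ) = (m·rq²b, m·rq(q−1), m(rqa − ra + a), m(q(a−1) + (r−1)(q−1)a), m(rqa − ra + a)). -/
/-!
Let `q = 1 + ab`, and split the complement of every one of `q` points into `b` blocks of size `a`.
A vertex consists of a class (one of `r`), two points `y` and `x`, and a block of `x`. It shows `x`
to its own class and `y` to the others, and sends arcs to the vertices whose shown point lies in its
block. Given the points of a middle vertex, its block is forced by the head of the path, so there
are `qa + (r - 1)(q - 1)a - q[u → v]` paths of length two from `u` to `v`, also for `u = v`. Hence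
`t = μ`, and then replacing every vertex by `m` copies multiplies all parameters by `m`.
-/

section Counting

theorem natCard_subtype_and_ne_of_pos {α : Type*} [Finite α] {p : α → Prop} {z : α} (hz : p z) :
    Nat.card {x // p x ∧ x ≠ z} = Nat.card {x // p x} - 1 :=
  Set.ncard_sdiff_singleton_of_mem (s := {x | p x}) hz

theorem natCard_subtype_and_ne_of_neg {α : Type*} {p : α → Prop} {z : α} (hz : ¬ p z) :
    Nat.card {x // p x ∧ x ≠ z} = Nat.card {x // p x} :=
  Nat.card_congr (Equiv.subtypeEquivRight fun _ => and_iff_left_of_imp fun hx h => hz (h ▸ hx))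

theorem natCard_subtype_ne {α : Type*} [Finite α] (z : α) :
    Nat.card {x // x ≠ z} = Nat.card α - 1 := by
  simpa only [true_and, Nat.card_subtype_true] using
    natCard_subtype_and_ne_of_pos (p := fun _ => True) (z := z) trivial

theorem natCard_subtype_prod {α β : Type*} [Fintype α] [Finite β] (p : α → β → Prop) :
    Nat.card {c : α × β // p c.1 c.2} = ∑ x, Nat.card {y // p x y} := by
  rw [Nat.card_congr (Equiv.subtypeProdEquivSigmaSubtype p), Nat.card_sigma]

theorem natCard_subtype_prod_of_forall {α β : Type*} [Finite α] [Finite β] {p : α → β → Prop}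
    {n : ℕ} (h : ∀ x, Nat.card {y // p x y} = n) :
    Nat.card {c : α × β // p c.1 c.2} = Nat.card α * n := by
  have := Fintype.ofFinite α
  simp [natCard_subtype_prod, h]

theorem natCard_subtype_prod_of_forall_ne {α β : Type*} [Finite α] [Finite β] {p : α → β → Prop}
    {i : α} {m n : ℕ} (hi : Nat.card {y // p i y} = m)
    (hne : ∀ x, x ≠ i → Nat.card {y // p x y} = n) :
    Nat.card {c : α × β // p c.1 c.2} = m + (Nat.card α - 1) * n := by
  classical
  have := Fintype.ofFinite α
  rw [natCard_subtype_prod, ← Finset.add_sum_erase _ _ (Finset.mem_univ i), hi,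
    Finset.sum_congr rfl fun x hx => hne x (Finset.ne_of_mem_erase hx)]
  rw [Finset.sum_const, Finset.card_erase_of_mem (Finset.mem_univ i), Finset.card_univ,
    Nat.card_eq_fintype_card, smul_eq_mul]

theorem natCard_subtype_prod_and {α β : Type*} (p : α → Prop) (q : β → Prop) :
    Nat.card {c : α × β // p c.1 ∧ q c.2} = Nat.card {x // p x} * Nat.card {y // q y} := by
  rw [Nat.card_congr Equiv.subtypeProdEquivProd, Nat.card_prod]

theorem natCard_subtype_fst {α : Type*} (β : Type*) (p : α → Prop) :
    Nat.card {c : α × β // p c.1} = Nat.card {x // p x} * Nat.card β := by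
  rw [Nat.card_congr Equiv.prodSubtypeFstEquivSubtypeProd, Nat.card_prod]

theorem natCard_subtype_prod_of_existsUnique {α β : Type*} {p : α → β → Prop} {q : α → Prop}
    (hq : ∀ x, q x → ∃! y, p x y) (hp : ∀ x y, p x y → q x) :
    Nat.card {c : α × β // p c.1 c.2} = Nat.card {x // q x} := by
  let fst (c : {c : α × β // p c.1 c.2}) : {x // q x} := ⟨c.1.1, hp _ _ c.2⟩
  refine Nat.card_congr (Equiv.ofBijective fst ⟨?_, ?_⟩)
  · rintro ⟨⟨x, y⟩, hy⟩ ⟨⟨x', y'⟩, hy'⟩ h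
    obtain rfl : x = x' := congrArg Subtype.val h
    obtain rfl : y = y' := (hq x (hp x y hy)).unique hy hy'
    rfl
  · rintro ⟨x, hx⟩
    obtain ⟨y, hy, -⟩ := hq x hx
    exact ⟨⟨(x, y), hy⟩, rfl⟩

end Counting

section EqualParameters

variable {V : Type} {Adj : V → V → Prop} {v k t lam : ℕ}

/- The reciprocal neighbors of `x` are the middle vertices of the paths of length two from `x` to
`x`, so for `t = μ` the cases `x = y` and `x ≠ y` merge. -/
theorem isDSRG_self_iff :
    IsDSRG Adj v k t lam t ↔ Finite V ∧ (∀ x, ¬ Adj x x) ∧ Nat.card V = v ∧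
      (∀ x, Nat.card {y // Adj x y} = k) ∧ (∀ x, Nat.card {y // Adj y x} = k) ∧
      (∀ x y, Adj x y → Nat.card {z // Adj x z ∧ Adj z y} = lam) ∧
      (∀ x y, ¬ Adj x y → Nat.card {z // Adj x z ∧ Adj z y} = t) := by
  constructor
  · rintro ⟨hV, irrefl, hv, hout, hin, ht, hlam, hmu⟩
    refine ⟨hV, irrefl, hv, hout, hin, fun x y hxy => hlam x y ?_ hxy, fun x y hxy => ?_⟩
    · rintro rfl
      exact irrefl x hxy
    · rcases eq_or_ne x y with rfl | hne
      exacts [ht x, hmu x y hne hxy]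
  · rintro ⟨hV, irrefl, hv, hout, hin, hlam, hmu⟩
    exact ⟨hV, irrefl, hv, hout, hin, fun x => hmu x x (irrefl x), fun x y _ => hlam x y,
      fun x y _ => hmu x y⟩

theorem IsDSRG.blowUp (h : IsDSRG Adj v k t lam t) (M : Type) [Finite M] :
    IsDSRG (fun x y : V × M => Adj x.1 y.1) (v * Nat.card M) (k * Nat.card M) (t * Nat.card M)
      (lam * Nat.card M) (t * Nat.card M) := by
  rw [isDSRG_self_iff] at h ⊢
  obtain ⟨hV, irrefl, rfl, hout, hin, hlam, hmu⟩ := h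
  refine ⟨inferInstance, fun x => irrefl x.1, Nat.card_prod V M, fun x => ?_, fun x => ?_,
    fun x y hxy => ?_, fun x y hxy => ?_⟩
  · rw [natCard_subtype_fst M (Adj x.1), hout]
  · rw [natCard_subtype_fst M (Adj · x.1), hin]
  · rw [natCard_subtype_fst M fun z => Adj x.1 z ∧ Adj z y.1, hlam _ _ hxy]
  · rw [natCard_subtype_fst M fun z => Adj x.1 z ∧ Adj z y.1, hmu _ _ hxy]

end EqualParameters

/-- The blocks `{z | I x β z}`, for `β : B`, partition the complement of every point `x : Q` into
sets of size `a`. -/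
structure IsComplementPartition {Q B : Type*} (I : Q → B → Q → Prop) (a : ℕ) : Prop where
  natCard_block (x : Q) (β : B) : Nat.card {z // I x β z} = a
  existsUnique_block {x z : Q} (h : x ≠ z) : ∃! β, I x β z
  not_self (x : Q) (β : B) : ¬ I x β x

theorem exists_isComplementPartition {Q B : Type*} [Finite B] {a : ℕ}
    (hQ : Nat.card Q = 1 + a * Nat.card B) :
    ∃ I : Q → B → Q → Prop, IsComplementPartition I a := by
  have : Finite Q := Nat.finite_of_card_ne_zero (by lia)
  have hcard (x : Q) : Nat.card {z // z ≠ x} = Nat.card (Fin a × B) := by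
    rw [natCard_subtype_ne, hQ, Nat.card_prod, Nat.card_fin, Nat.add_sub_cancel_left]
  have e (x : Q) : Fin a × B ≃ {z // z ≠ x} := (Finite.card_eq.1 (hcard x).symm).some
  refine ⟨fun x β z => z ∈ Set.range fun s => (e x (s, β) : Q), fun x β => ?_,
    fun {x z} h => ?_, ?_⟩
  · have hinj : Function.Injective fun s => (e x (s, β) : Q) :=
      Subtype.val_injective.comp ((e x).injective.comp (Prod.mk_left_injective β))
    exact (Nat.card_range_of_injective hinj).trans (Nat.card_fin a)
  · obtain ⟨⟨s, β⟩, hz⟩ := (e x).surjective ⟨z, h.symm⟩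
    refine ⟨β, ⟨s, congrArg Subtype.val hz⟩, ?_⟩
    rintro γ ⟨s', hz'⟩
    exact congrArg Prod.snd ((e x).injective ((Subtype.ext hz').trans hz.symm))
  · rintro x β ⟨s, hs⟩
    exact (e x (s, β)).2 hs

/-- Adjacency of the digraph on the vertices `(i, y, x, β)` with class `i`, points `y` and `x`, and
block `β` of `x`. A vertex is seen as `x` from its own class and as `y` from the other classes;
there is an arc when the tail sees the head in its block. -/
def BlockAdj {R Q B : Type*} [DecidableEq R] (I : Q → B → Q → Prop) :
    R × Q × Q × B → R × Q × Q × B → Prop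
  | (i, _, x, β), (j, y', x', _) => I x β (if i = j then x' else y')

namespace IsComplementPartition

variable {R Q B : Type*} {I : Q → B → Q → Prop} {a : ℕ}

theorem ne (hI : IsComplementPartition I a) {x z : Q} {β : B} (h : I x β z) : x ≠ z := by
  rintro rfl
  exact hI.not_self x β h

theorem natCard_containing_and (hI : IsComplementPartition I a) (p : Q → Prop) (z : Q) :
    Nat.card {c : Q × B // p c.1 ∧ I c.1 c.2 z} = Nat.card {x // p x ∧ x ≠ z} := by
  refine natCard_subtype_prod_of_existsUnique (p := fun x β => p x ∧ I x β z) ?_ ?_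
  · rintro x ⟨hx, hne⟩
    simpa only [hx, true_and] using hI.existsUnique_block hne
  · exact fun x β h => ⟨h.1, hI.ne h.2⟩

variable [Finite Q]

theorem natCard_points_sub_one [Finite B] (hI : IsComplementPartition I a) (x : Q) :
    Nat.card Q - 1 = Nat.card B * a :=
  calc
    Nat.card Q - 1 = Nat.card {z // x ≠ z} := by
      simp only [ne_comm (a := x), natCard_subtype_ne]
    _ = Nat.card {c : Q × B // I x c.2 c.1} :=
      (natCard_subtype_prod_of_existsUnique (p := fun z β => I x β z)
        (fun _ => hI.existsUnique_block) fun _ _ => hI.ne).symm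
    _ = Nat.card {c : B × Q // I x c.1 c.2} :=
      Nat.card_congr ((Equiv.prodComm Q B).subtypeEquiv fun _ => Iff.rfl)
    _ = Nat.card B * a := natCard_subtype_prod_of_forall (hI.natCard_block x)

theorem natCard_containing (hI : IsComplementPartition I a) (z : Q) :
    Nat.card {c : Q × B // I c.1 c.2 z} = Nat.card Q - 1 := by
  simpa only [true_and, natCard_subtype_ne] using hI.natCard_containing_and (fun _ => True) z

variable [DecidableEq R] [Finite R] [Finite B]

theorem natCard_blockAdj_out (hI : IsComplementPartition I a) (u : R × Q × Q × B) :
    Nat.card {w // BlockAdj I u w} = Nat.card R * (Nat.card Q * (Nat.card B * a)) := by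
  obtain ⟨i, y, x, β⟩ := u
  refine natCard_subtype_prod_of_forall (p := fun k w => BlockAdj I (i, y, x, β) (k, w)) fun k => ?_
  simp only [BlockAdj]
  by_cases hk : i = k
  · simp only [hk, if_true]
    refine natCard_subtype_prod_of_forall (p := fun (_ : Q) (c : Q × B) => I x β c.1) fun _ => ?_
    rw [natCard_subtype_fst B (I x β), hI.natCard_block, mul_comm]
  · simp only [hk, if_false]
    rw [natCard_subtype_fst (Q × B) (I x β), hI.natCard_block, Nat.card_prod]
    ring

theorem natCard_blockAdj_in (hI : IsComplementPartition I a) (v : R × Q × Q × B) :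
    Nat.card {w // BlockAdj I w v} = Nat.card R * (Nat.card Q * (Nat.card Q - 1)) := by
  obtain ⟨j, y, x, β⟩ := v
  refine natCard_subtype_prod_of_forall (p := fun k w => BlockAdj I (k, w) (j, y, x, β)) fun k => ?_
  exact natCard_subtype_prod_of_forall
    (p := fun (_ : Q) (c : Q × B) => I c.1 c.2 (if k = j then x else y))
    fun _ => hI.natCard_containing _

/- The tail sees a middle vertex of class `i` in its point `x`, which the block must contain while
`y` is free; in any other class it sees `y`, and the two conditions constrain `y` and `x`
separately. -/
theorem natCard_blockAdj_path (hI : IsComplementPartition I a) (i j : R) (y x y' x' : Q)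
    (β γ : B) :
    Nat.card {w // BlockAdj I (i, y, x, β) w ∧ BlockAdj I w (j, y', x', γ)} =
      Nat.card Q * Nat.card {z // I x β z ∧ z ≠ if i = j then x' else y'} +
        (Nat.card R - 1) * (a * (Nat.card Q - 1)) := by
  refine natCard_subtype_prod_of_forall_ne (i := i)
    (p := fun k w => BlockAdj I (i, y, x, β) (k, w) ∧ BlockAdj I (k, w) (j, y', x', γ)) ?_ ?_
  · simp only [BlockAdj, if_true]
    exact natCard_subtype_prod_of_forall
      (p := fun (_ : Q) (c : Q × B) => I x β c.1 ∧ I c.1 c.2 (if i = j then x' else y'))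
      fun _ => hI.natCard_containing_and (I x β) _
  · intro k hk
    simp only [BlockAdj, hk.symm, if_false]
    rw [natCard_subtype_prod_and (I x β) fun c : Q × B => I c.1 c.2 (if k = j then x' else y'),
      hI.natCard_block, hI.natCard_containing]

theorem natCard_blockAdj_path_of_adj (hI : IsComplementPartition I a) {u v : R × Q × Q × B}
    (huv : BlockAdj I u v) :
    Nat.card {w // BlockAdj I u w ∧ BlockAdj I w v} =
      Nat.card Q * (a - 1) + (Nat.card R - 1) * (a * (Nat.card Q - 1)) := by
  obtain ⟨⟨i, y, x, β⟩, ⟨j, y', x', γ⟩⟩ := u, v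
  rw [natCard_blockAdj_path hI, natCard_subtype_and_ne_of_pos (p := I x β) huv, hI.natCard_block]

theorem natCard_blockAdj_path_of_not_adj (hI : IsComplementPartition I a) {u v : R × Q × Q × B}
    (huv : ¬ BlockAdj I u v) :
    Nat.card {w // BlockAdj I u w ∧ BlockAdj I w v} =
      Nat.card Q * a + (Nat.card R - 1) * (a * (Nat.card Q - 1)) := by
  obtain ⟨⟨i, y, x, β⟩, ⟨j, y', x', γ⟩⟩ := u, v
  rw [natCard_blockAdj_path hI, natCard_subtype_and_ne_of_neg (p := I x β) huv, hI.natCard_block]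

theorem isDSRG_blockAdj {R Q B : Type} {I : Q → B → Q → Prop} [DecidableEq R] [Finite R] [Finite Q]
    [Finite B] (hI : IsComplementPartition I a) :
    IsDSRG (BlockAdj (R := R) I)
      (Nat.card R * (Nat.card Q * (Nat.card Q * Nat.card B)))
      (Nat.card R * (Nat.card Q * (Nat.card B * a)))
      (Nat.card Q * a + (Nat.card R - 1) * (a * (Nat.card Q - 1)))
      (Nat.card Q * (a - 1) + (Nat.card R - 1) * (a * (Nat.card Q - 1)))
      (Nat.card Q * a + (Nat.card R - 1) * (a * (Nat.card Q - 1))) := by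
  refine isDSRG_self_iff.2 ⟨inferInstance, ?_, by simp only [Nat.card_prod],
    hI.natCard_blockAdj_out, fun v => ?_, fun _ _ => hI.natCard_blockAdj_path_of_adj,
    fun _ _ => hI.natCard_blockAdj_path_of_not_adj⟩
  · rintro ⟨i, y, x, β⟩
    simpa only [BlockAdj, if_true] using hI.not_self x β
  · rw [hI.natCard_blockAdj_in, hI.natCard_points_sub_one v.2.1]

end IsComplementPartition

theorem exists_dsrg_multiple_constructionI_general (r a b m : ℕ) (hr : 0 < r) :
    ∃ (V : Type) (Adj : V → V → Prop),
      IsDSRG Adj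
        (m * (r * (1 + a * b) ^ 2 * b))
        (m * (r * (1 + a * b) * (a * b)))
        (m * (r * (1 + a * b) * a - r * a + a))
        (m * ((1 + a * b) * (a - 1) + (r - 1) * (a * b) * a))
        (m * (r * (1 + a * b) * a - r * a + a)) := by
  obtain ⟨I, hI⟩ := exists_isComplementPartition (Q := Fin (1 + a * b)) (B := Fin b) (a := a)
    (by simp)
  have hmu : r * (1 + a * b) * a - r * a + a = (1 + a * b) * a + (r - 1) * (a * (a * b)) := by
    obtain ⟨s, rfl⟩ := Nat.exists_eq_add_one.2 hr
    have hsub : (s + 1) * (1 + a * b) * a = (s + 1) * (a * b) * a + (s + 1) * a := by ring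
    rw [hsub, Nat.add_sub_cancel, Nat.add_sub_cancel]
    ring
  have hD := (hI.isDSRG_blockAdj (R := Fin r)).blowUp (Fin m)
  refine ⟨(Fin r × Fin (1 + a * b) × Fin (1 + a * b) × Fin b) × Fin m,
    fun u v => BlockAdj I u.1 v.1, ?_⟩
  convert hD using 1 <;>
    simp only [hmu, Nat.card_fin, Nat.add_sub_cancel_left] <;> ring

/-- Let `r, a, b` be integers greater than 1 and set `q = 1 + ab`.  Then for every
positive integer `m` there exists a directed strongly regular graph with parameters
`(m·rq²b, m·rq(q−1), m(rqa − ra + a), m(q(a−1) + (r−1)(q−1)a), m(rqa − ra + a))`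
(here `q − 1 = ab`). -/
theorem exists_dsrg_multiple_constructionI
    (r a b m : ℕ) (hr : 1 < r) (ha : 1 < a) (hb : 1 < b) (hm : 0 < m) :
    ∃ (V : Type) (Adj : V → V → Prop),
      IsDSRG Adj
        (m * (r * (1 + a * b) ^ 2 * b))
        (m * (r * (1 + a * b) * (a * b)))
        (m * (r * (1 + a * b) * a - r * a + a))
        (m * ((1 + a * b) * (a - 1) + (r - 1) * (a * b) * a))
        (m * (r * (1 + a * b) * a - r * a + a)) :=
  exists_dsrg_multiple_constructionI_general r a b m (Nat.zero_lt_of_lt hr)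
end

section
/- Construction II, m-fold multiple of the first graph. For a positive integer m, let D be the directed graph on the vertex set V × {1, …, m}, where V = {(g, B) : g ∈ P, B ∈ 𝓑_g}, with adjacency ((g, B), c) → ((g′, B′), c′) if and only if g ∈ B′. Then D is a directed strongly regular graph with parameters (v, k, t, λ, μ) = (mns, mls, mld, m(l−1)d, mld). -/
/-!
Duval: if `t = μ`, replacing every vertex of a directed strongly regular graph by `m` independent
copies multiplies all parameters by `m`. Indeed, distinct copies of one vertex are non-adjacent and
`m * t` paths of length two lead from one to the other, the number that `m * μ` prescribes.

So it remains to treat `m = 1`. Paths from `(g, B)` to `(g', B')` run through the `(i, B'')` with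
`i ∈ B'` and `g ∈ B''`: none for `i = g`, and `d` for every other `i ∈ B'`. Hence their number is
`d * |B' \ {g}|`, which depends only on whether `g ∈ B'`.
-/

open Finset

lemma natCard_and_mem_eq_card_mul {V ι : Type*} [Finite V] {p : V → Prop} {f : V → ι} {T : Finset ι}
    {c : ℕ} (hc : ∀ i ∈ T, Nat.card {v // p v ∧ f v = i} = c) :
    Nat.card {v // p v ∧ f v ∈ T} = #T * c := by
  classical
  have := Fintype.ofFinite V
  simp only [Nat.card_eq_fintype_card, Fintype.card_subtype] at hc ⊢
  rw [card_eq_sum_card_fiberwise (f := f) (t := T) fun v hv ↦ (mem_filter.1 hv).2.2]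
  refine sum_const_nat fun i hi ↦ ?_
  rw [← hc i hi, filter_filter]
  congr 1 with v
  grind

lemma natCard_subtype_fst_s8 {V C : Type*} (p : V → Prop) :
    Nat.card {y : V × C // p y.1} = Nat.card C * Nat.card {y // p y} := by
  rw [Nat.card_congr Equiv.prodSubtypeFstEquivSubtypeProd, Nat.card_prod, mul_comm]

theorem IsDSRG.prod_of_eq {V : Type} {Adj : V → V → Prop} {v k t lam : ℕ}
    (h : IsDSRG Adj v k t lam t) (C : Type) [Finite C] :
    IsDSRG (V := V × C) (fun x y ↦ Adj x.1 y.1) (Nat.card C * v) (Nat.card C * k)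
      (Nat.card C * t) (Nat.card C * lam) (Nat.card C * t) := by
  obtain ⟨hfin, hirrefl, rfl, hout, hin, hrecip, hadj, hnonadj⟩ := h
  refine ⟨inferInstance, fun x ↦ hirrefl x.1, by rw [Nat.card_prod, mul_comm], fun x ↦ ?_,
    fun x ↦ ?_, fun x ↦ ?_, fun x y _ (hxy : Adj x.1 y.1) ↦ ?_, fun x y _ hxy ↦ ?_⟩
  · rw [natCard_subtype_fst_s8 (Adj x.1), hout]
  · rw [natCard_subtype_fst_s8 (Adj · x.1), hin]
  · rw [natCard_subtype_fst_s8 fun z ↦ Adj x.1 z ∧ Adj z x.1, hrecip]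
  · have hne : x.1 ≠ y.1 := fun he ↦ hirrefl y.1 (by rwa [he] at hxy)
    rw [natCard_subtype_fst_s8 fun z ↦ Adj x.1 z ∧ Adj z y.1, hadj _ _ hne hxy]
  · rw [natCard_subtype_fst_s8 fun z ↦ Adj x.1 z ∧ Adj z y.1]
    obtain heq | hne := eq_or_ne x.1 y.1
    · rw [← heq, hrecip]
    · rw [hnonadj _ _ hne hxy]

/-- A family of tactical configurations, one on the complement `P \ {i}` of each point `i`, as used
in Construction II. An index `v` stands for the pair of the point `point v` and the block `block v`
of the configuration at that point, so that blocks may be repeated. The configuration at `i` has `s`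
blocks of size `l`, and every point other than `i` lies in `d` of them. -/
structure IsPuncturedConfiguration {V α : Type*} (point : V → α) (block : V → Finset α)
    (d l s : ℕ) : Prop where
  point_notMem : ∀ v, point v ∉ block v
  card_block : ∀ v, #(block v) = l
  natCard_point_eq : ∀ i, Nat.card {v // point v = i} = s
  natCard_mem_and_point_eq : ∀ i x, x ≠ i → Nat.card {v // x ∈ block v ∧ point v = i} = d

namespace IsPuncturedConfiguration

section Counting

variable {V α : Type*} [Finite V] {point : V → α} {block : V → Finset α} {d l s : ℕ}

lemma natCard_point_mem (h : IsPuncturedConfiguration point block d l s) (T : Finset α) :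
    Nat.card {v // point v ∈ T} = #T * s := by
  simpa only [true_and] using natCard_and_mem_eq_card_mul (p := fun _ ↦ True) (f := point) (T := T)
    fun i _ ↦ by simpa only [true_and] using h.natCard_point_eq i

lemma natCard_mem_and_point_mem [DecidableEq α] (h : IsPuncturedConfiguration point block d l s)
    (g : α) (T : Finset α) :
    Nat.card {v // g ∈ block v ∧ point v ∈ T} = #(T.erase g) * d := by
  have hpoint (v : V) : g ∈ block v ∧ point v ∈ T ↔ g ∈ block v ∧ point v ∈ T.erase g := by
    have := h.point_notMem v
    grind
  simp only [hpoint]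
  exact natCard_and_mem_eq_card_mul fun i hi ↦
    h.natCard_mem_and_point_eq i g (ne_of_mem_erase hi).symm

variable [Fintype α]

lemma natCard_eq (h : IsPuncturedConfiguration point block d l s) :
    Nat.card V = Fintype.card α * s := by
  rw [← card_univ, ← h.natCard_point_mem,
    Nat.card_congr (Equiv.subtypeUnivEquiv fun v ↦ mem_univ (point v))]

lemma card_sub_one_mul_eq [Nonempty α] (h : IsPuncturedConfiguration point block d l s) :
    (Fintype.card α - 1) * d = l * s := by
  classical
  have := Fintype.ofFinite V
  obtain ⟨i⟩ := ‹Nonempty α›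
  have hs := h.natCard_point_eq i
  have hd := h.natCard_mem_and_point_eq i
  simp only [Nat.card_eq_fintype_card, Fintype.card_subtype] at hs hd
  rw [← card_univ, ← card_erase_of_mem (mem_univ i), mul_comm l, ← hs]
  refine (card_mul_eq_card_mul (fun v x ↦ x ∈ block v) (fun v hv ↦ ?_) fun x hx ↦ ?_).symm
  · rw [← h.card_block v, bipartiteAbove]
    have := h.point_notMem v
    congr 1 with x
    grind
  · rw [← hd x (ne_of_mem_erase hx), bipartiteBelow, filter_filter]
    simp only [and_comm]

end Counting

theorem isDSRG {V α : Type} [Finite V] [Fintype α] {point : V → α} {block : V → Finset α}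
    {d l s : ℕ} (h : IsPuncturedConfiguration point block d l s) :
    IsDSRG (fun x y ↦ point x ∈ block y) (Fintype.card α * s) (l * s) (l * d) ((l - 1) * d)
      (l * d) := by
  classical
  have paths_of_notMem (x y : V) (hxy : point x ∉ block y) :
      Nat.card {z // point x ∈ block z ∧ point z ∈ block y} = l * d := by
    rw [h.natCard_mem_and_point_mem, erase_eq_of_notMem hxy, h.card_block]
  refine ⟨inferInstance, h.point_notMem, h.natCard_eq, fun x ↦ ?_, fun x ↦ ?_,
    fun x ↦ paths_of_notMem x x (h.point_notMem x), fun x y _ hxy ↦ ?_,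
    fun x y _ hxy ↦ paths_of_notMem x y hxy⟩
  · have : Nonempty α := ⟨point x⟩
    rw [← h.card_sub_one_mul_eq, ← card_univ, ← card_erase_of_mem (mem_univ (point x)),
      ← h.natCard_mem_and_point_mem]
    simp only [mem_univ, and_true]
  · rw [h.natCard_point_mem, h.card_block]
  · rw [h.natCard_mem_and_point_mem, card_erase_of_mem hxy, h.card_block]

end IsPuncturedConfiguration

lemma natCard_and_fst_eq {α β : Type*} (𝓑 : α → Finset β) (p : β → Prop) [DecidablePred p] (i : α) :
    Nat.card {v : {x : α × β // x.2 ∈ 𝓑 x.1} // p v.1.2 ∧ v.1.1 = i} = #{B ∈ 𝓑 i | p B} := by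
  let e : {v : {x : α × β // x.2 ∈ 𝓑 x.1} // p v.1.2 ∧ v.1.1 = i} ≃ {B // B ∈ 𝓑 i ∧ p B} :=
    { toFun v := ⟨v.1.1.2, by simpa only [v.2.2] using v.1.2, v.2.1⟩
      invFun B := ⟨⟨(i, B), B.2.1⟩, B.2.2, rfl⟩
      left_inv := by rintro ⟨⟨⟨i, B⟩, hB⟩, hp, rfl⟩; rfl
      right_inv _ := rfl }
  rw [Nat.card_congr e]
  exact Nat.subtype_card _ fun B ↦ mem_filter

lemma IsPuncturedConfiguration.of_blocks {α : Type*} [DecidableEq α] {d l s : ℕ}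
    {𝓑 : α → Finset (Finset α)} (hs : ∀ i, #(𝓑 i) = s) (hl : ∀ i, ∀ B ∈ 𝓑 i, i ∉ B ∧ #B = l)
    (hd : ∀ i x, x ≠ i → #{B ∈ 𝓑 i | x ∈ B} = d) :
    IsPuncturedConfiguration (fun v : {x : α × Finset α // x.2 ∈ 𝓑 x.1} ↦ v.1.1)
      (fun v ↦ v.1.2) d l s where
  point_notMem v := (hl _ _ v.2).1
  card_block v := (hl _ _ v.2).2
  natCard_point_eq i := by
    simpa only [true_and, filter_true, hs] using natCard_and_fst_eq 𝓑 (fun _ ↦ True) i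
  natCard_mem_and_point_eq i x hx := by rw [natCard_and_fst_eq 𝓑 (x ∈ ·), hd i x hx]

theorem constructionII_D1_multiple_dsrg_general {V α C : Type} [Finite V] [Fintype α] [Finite C]
    {point : V → α} {block : V → Finset α} {d l s : ℕ}
    (h : IsPuncturedConfiguration point block d l s) :
    IsDSRG (V := V × C) (fun x y ↦ point x.1 ∈ block y.1) (Nat.card C * (Fintype.card α * s))
      (Nat.card C * (l * s)) (Nat.card C * (l * d)) (Nat.card C * ((l - 1) * d))
      (Nat.card C * (l * d)) :=
  h.isDSRG.prod_of_eq C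

/-- **Construction II, `m`-fold multiple of the first graph.**  Let `n, d, l, s` be
positive integers with `d(n−1) = ls`, and let `𝓑 i` (for each point `i` of the
`n`-element set `α`) be a family of `s` distinct blocks, each an `l`-subset of
`P \ {i}`, every point of `P \ {i}` lying in exactly `d` of them.  The vertices
are the pairs `((g, B), c)` with `B ∈ 𝓑 g` and `c ∈ {1, …, m}`, and
`((g,B),c) → ((g',B'),c')` iff `g ∈ B'`.  This directed graph is a DSRG with
parameters `(mns, mls, mld, m(l−1)d, mld)`. -/
theorem constructionII_D1_multiple_dsrg
    {α : Type} [Fintype α] [DecidableEq α]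
    (n d l s m : ℕ) (hn : 0 < n) (hd : 0 < d) (hl : 0 < l) (hs : 0 < s) (hm : 0 < m)
    (hdn : d * (n - 1) = l * s)
    (hcard : Fintype.card α = n)
    (𝓑 : α → Finset (Finset α))
    (hBs : ∀ i : α, (𝓑 i).card = s)
    (hBl : ∀ i : α, ∀ B ∈ 𝓑 i, i ∉ B ∧ B.card = l)
    (hBreg : ∀ i x : α, x ≠ i → ((𝓑 i).filter (fun B => x ∈ B)).card = d) :
    IsDSRG (V := {x : α × Finset α // x.2 ∈ 𝓑 x.1} × Fin m)
      (fun x y => x.1.1.1 ∈ y.1.1.2)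
      (m * (n * s)) (m * (l * s)) (m * (l * d)) (m * ((l - 1) * d)) (m * (l * d)) := by
  simpa only [Nat.card_fin, hcard] using
    constructionII_D1_multiple_dsrg_general (C := Fin m) (.of_blocks hBs hBl hBreg)
end

section
/- Construction II, m-fold multiple of the second graph. For a positive integer m, let D be the directed graph on the vertex set V × {1, …, m}, where V = {(g, B) : g ∈ P, B ∈ 𝓑_g}, with adjacency ((g, B), c) → ((g′, B′), c′) if and only if either g ∈ B′, or g = g′ and (B, c) ≠ (B′, c′). Then D is a directed strongly regular graph with parameters (v, k, t, λ, μ) = (mns, m(ls + s) − 1, m(ld + s) − 1, m(ld + s) − 2, m(l+1)d). -/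
/-!
Adding a loop at every vertex turns adjacency from `(g, B, c)` to `(g', B', c')` into the single
condition `g ∈ insert g' B'`. The number of 2-paths from `x` to `y` in the looped graph is then a
sum over the possible first coordinates of the middle vertex: it is `(l + 1) * d` if `x ↛ y`, while
`x → y` replaces one of the `l + 1` summands `d` by `s`. The `m`-fold multiple is this same
construction for the families in which each block is repeated `m` times, with `(m * s, l, m * d)`
in place of `(s, l, d)`.
-/

open Finset

theorem natCard_subtype_and_ne {α : Type*} {p : α → Prop} {a : α} (ha : p a) :
    Nat.card {x // p x ∧ x ≠ a} = Nat.card {x // p x} - 1 :=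
  Set.ncard_sdiff_singleton_of_mem (s := {x | p x}) ha

theorem IsDSRG.of_reflexive {V : Type} [Finite V] {C : V → V → Prop} (hC : ∀ x, C x x)
    {v k a b : ℕ} (hv : Nat.card V = v)
    (hout : ∀ x, Nat.card {y // C x y} = k) (hin : ∀ x, Nat.card {y // C y x} = k)
    (hpos : ∀ x y, C x y → Nat.card {z // C x z ∧ C z y} = a)
    (hneg : ∀ x y, ¬ C x y → Nat.card {z // C x z ∧ C z y} = b) :
    IsDSRG (fun x y => C x y ∧ x ≠ y) v (k - 1) (a - 1) (a - 2) b := by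
  refine ⟨inferInstance, fun x h => h.2 rfl, hv, fun x => ?_, fun x => ?_, fun x => ?_,
    fun x y hne hxy => ?_, fun x y hne hxy => ?_⟩
  · simp only [ne_comm (a := x)]
    rw [natCard_subtype_and_ne (hC x), hout]
  · exact (natCard_subtype_and_ne (p := (C · x)) (hC x)).trans (congrArg (· - 1) (hin x))
  · have hiff : ∀ y, (C x y ∧ x ≠ y) ∧ C y x ∧ y ≠ x ↔ (C x y ∧ C y x) ∧ y ≠ x := by grind
    simp only [hiff]
    rw [natCard_subtype_and_ne ⟨hC x, hC x⟩, hpos x x (hC x)]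
  · have hiff : ∀ z, (C x z ∧ x ≠ z) ∧ C z y ∧ z ≠ y ↔ ((C x z ∧ C z y) ∧ z ≠ x) ∧ z ≠ y := by
      grind
    simp only [hiff]
    rw [natCard_subtype_and_ne ⟨⟨hxy.1, hC y⟩, hne.symm⟩, natCard_subtype_and_ne ⟨hC x, hxy.1⟩,
      hpos x y hxy.1, Nat.sub_sub]
  · have hCxy : ¬ C x y := fun h => hxy ⟨h, hne⟩
    have hiff : ∀ z, (C x z ∧ x ≠ z) ∧ C z y ∧ z ≠ y ↔ C x z ∧ C z y := by grind
    simp only [hiff]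
    exact hneg x y hCxy

/-- The blocks `blk v`, indexed by a finite type `V`, form a family of designs on the punctured
point sets: those `v` with `pt v = g` index a design on `α ∖ {g}` with `s` blocks of size `l`, in
which every point lies on `d` blocks. Blocks may be repeated, since they are indexed. -/
structure IsPuncturedDesign {V α : Type*} [Fintype V] [DecidableEq α]
    (pt : V → α) (blk : V → Finset α) (s l d : ℕ) : Prop where
  pt_notMem : ∀ v, pt v ∉ blk v
  card_blk : ∀ v, #(blk v) = l
  card_fiber : ∀ g, #{v | pt v = g} = s
  card_fiber_through : ∀ g x, x ≠ g → #{v | pt v = g ∧ x ∈ blk v} = d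

namespace IsPuncturedDesign

section Counting

variable {V α : Type*} [Fintype V] [DecidableEq α] {pt : V → α} {blk : V → Finset α} {s l d : ℕ}

theorem mul_card_sub_one [Fintype α] (h : IsPuncturedDesign pt blk s l d) (g : α) :
    d * (Fintype.card α - 1) = l * s := by
  have hblocks : ∀ v ∈ ({v | pt v = g} : Finset V),
      #((univ.erase g).bipartiteAbove (fun v x => x ∈ blk v) v) = l := by
    intro v hv
    have hg : g ∉ blk v := (mem_filter_univ v).1 hv ▸ h.pt_notMem v
    rw [← h.card_blk v]
    congr 1
    grind [bipartiteAbove]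
  have hpoints : ∀ x ∈ univ.erase g,
      #(({v | pt v = g} : Finset V).bipartiteBelow (fun v x => x ∈ blk v) x) = d := by
    intro x hx
    rw [bipartiteBelow, filter_filter, h.card_fiber_through g x (ne_of_mem_erase hx)]
  calc d * (Fintype.card α - 1)
      = #(univ.erase g) * d := by rw [card_erase_of_mem (mem_univ g), card_univ, mul_comm]
    _ = #{v | pt v = g} * l := (card_mul_eq_card_mul _ hblocks hpoints).symm
    _ = l * s := by rw [h.card_fiber, mul_comm]

theorem card_insert_pt (h : IsPuncturedDesign pt blk s l d) (v : V) :
    #(insert (pt v) (blk v)) = l + 1 := by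
  rw [card_insert_of_notMem (h.pt_notMem v), h.card_blk]

theorem card_pt_mem (h : IsPuncturedDesign pt blk s l d) (S : Finset α) :
    #{v | pt v ∈ S} = #S * s := by
  rw [card_eq_sum_card_fiberwise (f := pt) (t := S) (by simp [Set.MapsTo]), ← smul_eq_mul]
  refine sum_eq_card_nsmul fun g hg => ?_
  rw [filter_filter, ← h.card_fiber g]
  congr 1
  grind

theorem card_fiber_mem_insert (h : IsPuncturedDesign pt blk s l d) (g x : α) :
    #{v | pt v = g ∧ x ∈ insert (pt v) (blk v)} = if g = x then s else d := by
  split_ifs with hgx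
  · rw [← h.card_fiber g]
    congr 1
    grind
  · rw [← h.card_fiber_through g x (Ne.symm hgx)]
    congr 1
    grind

theorem card_mem_insert_and_pt_mem (h : IsPuncturedDesign pt blk s l d) (x : α) (S : Finset α) :
    #{v | x ∈ insert (pt v) (blk v) ∧ pt v ∈ S} = #(S.erase x) * d + if x ∈ S then s else 0 := by
  calc #{v | x ∈ insert (pt v) (blk v) ∧ pt v ∈ S}
      = ∑ g ∈ S, #{v | pt v = g ∧ x ∈ insert (pt v) (blk v)} := by
        rw [card_eq_sum_card_fiberwise (f := pt) (t := S) (by simp +contextual [Set.MapsTo])]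
        refine sum_congr rfl fun g hg => ?_
        rw [filter_filter]
        congr 1
        grind
    _ = ∑ g ∈ S, if g = x then s else d := by simp only [h.card_fiber_mem_insert]
    _ = #(S.erase x) * d + if x ∈ S then s else 0 := by
        rw [sum_ite, filter_ne', filter_eq', sum_const, sum_const, smul_eq_mul, smul_eq_mul]
        split_ifs <;> simp [add_comm]

end Counting

theorem isDSRG_mem_insert {V : Type} {α : Type*} [Fintype V] [Fintype α] [DecidableEq α]
    {pt : V → α} {blk : V → Finset α} {s l d : ℕ} (h : IsPuncturedDesign pt blk s l d) :
    IsDSRG (fun v w => pt v ∈ insert (pt w) (blk w) ∧ v ≠ w)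
      (Fintype.card α * s) (l * s + s - 1) (l * d + s - 1) (l * d + s - 2) ((l + 1) * d) := by
  refine IsDSRG.of_reflexive (fun v => mem_insert_self (pt v) (blk v))
    ?_ (fun v => ?_) (fun v => ?_) (fun v w hvw => ?_) (fun v w hvw => ?_)
  all_goals simp only [Nat.card_eq_fintype_card, Fintype.card_subtype]
  · simpa using h.card_pt_mem univ
  · have hout := h.card_mem_insert_and_pt_mem (pt v) univ
    rw [card_erase_of_mem (mem_univ _), card_univ, mul_comm, h.mul_card_sub_one (pt v)] at hout
    simpa using hout
  · rw [h.card_pt_mem, h.card_insert_pt, add_one_mul]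
  · rw [h.card_mem_insert_and_pt_mem, card_erase_of_mem hvw, h.card_insert_pt, if_pos hvw,
      Nat.add_sub_cancel]
  · rw [h.card_mem_insert_and_pt_mem, erase_eq_of_notMem hvw, h.card_insert_pt, if_neg hvw,
      add_zero]

end IsPuncturedDesign

theorem constructionII_D2_multiple_dsrg_general {V : Type} {α : Type*} [Fintype V] [Fintype α]
    [DecidableEq α] {pt : V → α} {blk : V → Finset α} {s l d : ℕ}
    (h : IsPuncturedDesign pt blk s l d) :
    IsDSRG (fun v w => pt v ∈ blk w ∨ (pt v = pt w ∧ v ≠ w))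
      (Fintype.card α * s) (l * s + s - 1) (l * d + s - 1) (l * d + s - 2) ((l + 1) * d) := by
  have hadj : ∀ v w, pt v ∈ blk w ∨ (pt v = pt w ∧ v ≠ w) ↔
      pt v ∈ insert (pt w) (blk w) ∧ v ≠ w := by
    intro v w
    have hne : pt v ∈ blk w → v ≠ w := by
      rintro hv rfl
      exact h.pt_notMem v hv
    rw [mem_insert]
    tauto
  simpa only [hadj] using h.isDSRG_mem_insert

theorem card_copies_over {α κ : Type*} [Fintype α] [DecidableEq α] [Fintype κ]
    (𝓑 : α → Finset (Finset α)) (g : α) (q : Finset α → Prop) [DecidablePred q] :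
    #{z : {x : α × Finset α // x.2 ∈ 𝓑 x.1} × κ | z.1.1.1 = g ∧ q z.1.1.2} =
      Fintype.card κ * #{B ∈ 𝓑 g | q B} := by
  rw [← card_univ, ← card_product]
  refine card_nbij (fun z => (z.2, z.1.1.2)) ?_ ?_ ?_
  · rintro ⟨⟨⟨g', B⟩, hB⟩, c⟩ hz
    obtain ⟨rfl, hq⟩ := (mem_filter_univ _).1 hz
    exact mem_product.2 ⟨mem_univ c, mem_filter.2 ⟨hB, hq⟩⟩
  · intro z₁ hz₁ z₂ hz₂ heq
    have hpt : z₁.1.1.1 = z₂.1.1.1 :=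
      ((mem_filter_univ _).1 hz₁).1.trans ((mem_filter_univ _).1 hz₂).1.symm
    obtain ⟨hcopy, hblk⟩ := Prod.mk.inj heq
    exact Prod.ext (Subtype.ext (Prod.ext hpt hblk)) hcopy
  · rintro ⟨c, B⟩ hcB
    obtain ⟨hB, hq⟩ := mem_filter.1 (mem_product.1 hcB).2
    exact ⟨(⟨(g, B), hB⟩, c), (mem_filter_univ _).2 ⟨rfl, hq⟩, rfl⟩

theorem isPuncturedDesign_copies {α κ : Type*} [Fintype α] [DecidableEq α] [Fintype κ]
    {𝓑 : α → Finset (Finset α)} {s l d : ℕ} (hBs : ∀ i, #(𝓑 i) = s)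
    (hBl : ∀ i, ∀ B ∈ 𝓑 i, i ∉ B ∧ #B = l)
    (hBreg : ∀ i x, x ≠ i → #{B ∈ 𝓑 i | x ∈ B} = d) :
    IsPuncturedDesign (fun z : {x : α × Finset α // x.2 ∈ 𝓑 x.1} × κ => z.1.1.1)
      (fun z => z.1.1.2) (Fintype.card κ * s) l (Fintype.card κ * d) where
  pt_notMem z := (hBl _ _ z.1.2).1
  card_blk z := (hBl _ _ z.1.2).2
  card_fiber g := by simpa [hBs] using card_copies_over (κ := κ) 𝓑 g fun _ => True
  card_fiber_through g x hx := by rw [card_copies_over 𝓑 g (x ∈ ·), hBreg g x hx]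

theorem pt_eq_and_copy_ne_iff {α κ : Type*} {𝓑 : α → Finset (Finset α)}
    (x y : {x : α × Finset α // x.2 ∈ 𝓑 x.1} × κ) :
    x.1.1.1 = y.1.1.1 ∧ (x.1.1.2, x.2) ≠ (y.1.1.2, y.2) ↔ x.1.1.1 = y.1.1.1 ∧ x ≠ y := by
  simp only [ne_eq, Prod.ext_iff, Subtype.ext_iff]
  tauto

/-- **Construction II, `m`-fold multiple of the second graph.**  Let `n, d, l, s` be
positive integers with `d(n−1) = ls`, and let `𝓑 i` (for each point `i` of the
`n`-element set `α`) be a family of `s` distinct blocks, each an `l`-subset of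
`P \ {i}`, every point of `P \ {i}` lying in exactly `d` of them.  The vertices
are the pairs `((g, B), c)` with `B ∈ 𝓑 g` and `c ∈ {1, …, m}`, and
`((g,B),c) → ((g',B'),c')` iff `g ∈ B'`, or `g = g'` and `(B, c) ≠ (B', c')`.
This directed graph is a DSRG with parameters
`(mns, m(ls + s) − 1, m(ld + s) − 1, m(ld + s) − 2, m(l+1)d)`. -/
theorem constructionII_D2_multiple_dsrg
    {α : Type} [Fintype α] [DecidableEq α]
    (n d l s m : ℕ) (hn : 0 < n) (hd : 0 < d) (hl : 0 < l) (hs : 0 < s) (hm : 0 < m)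
    (hdn : d * (n - 1) = l * s)
    (hcard : Fintype.card α = n)
    (𝓑 : α → Finset (Finset α))
    (hBs : ∀ i : α, (𝓑 i).card = s)
    (hBl : ∀ i : α, ∀ B ∈ 𝓑 i, i ∉ B ∧ B.card = l)
    (hBreg : ∀ i x : α, x ≠ i → ((𝓑 i).filter (fun B => x ∈ B)).card = d) :
    IsDSRG (V := {x : α × Finset α // x.2 ∈ 𝓑 x.1} × Fin m)
      (fun x y => x.1.1.1 ∈ y.1.1.2 ∨
        (x.1.1.1 = y.1.1.1 ∧ (x.1.1.2, x.2) ≠ (y.1.1.2, y.2)))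
      (m * (n * s)) (m * (l * s + s) - 1) (m * (l * d + s) - 1) (m * (l * d + s) - 2)
      (m * ((l + 1) * d)) := by
  simpa only [pt_eq_and_copy_ne_iff, Fintype.card_fin, hcard, mul_add, add_mul, mul_left_comm]
    using constructionII_D2_multiple_dsrg_general
      (isPuncturedDesign_copies (κ := Fin m) hBs hBl hBreg)
end

section
/- Construction II with d = 1, m-fold multiple of the first graph. For a positive integer m, let D be the directed graph on the vertex set V × {1, …, m}, where V = {(i, B) : i ∈ P, B ∈ 𝓑_i}, with adjacency ((i, B), c) → ((j, B′), c′) if and only if i ∈ B′. Then D is a directed strongly regular graph with parameters (v, k, t, λ, μ) = (m(ls² + s), mls, ml, m(l−1), ml). -/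
/-!
Whether `((i, B), c) → ((j, B'), c')` holds does not depend on the labels, so `D` is a blow-up of
the graph on the pairs `(i, B)`. Such a blow-up of a DSRG with `t = μ` is again a DSRG: between two
copies of one vertex, which are not adjacent, there are `m t = m μ` paths of length two.

The successors of `(i, B)` are the `(j, B')` with `i ∈ B'`, and they correspond to the points
`j ≠ i`, since exactly one block of `𝓑 j` contains `i`. Hence the paths of length two from `(i, B)`
to `(j, B')` correspond to the points of `B' \ {i}`; there are `l - 1` of them if `i ∈ B'`, and `l`
otherwise.
-/

lemma card_subtype_fst {V ι : Type*} (p : V → Prop) :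
    Nat.card {z : V × ι // p z.1} = Nat.card ι * Nat.card {x : V // p x} := by
  rw [Nat.card_congr Equiv.prodSubtypeFstEquivSubtypeProd, Nat.card_prod, mul_comm]

theorem IsDSRG.multiple {V : Type} {Adj : V → V → Prop} {v k t lam : ℕ}
    (h : IsDSRG Adj v k t lam t) (ι : Type) [Finite ι] :
    IsDSRG (fun x y : V × ι => Adj x.1 y.1) (Nat.card ι * v) (Nat.card ι * k)
      (Nat.card ι * t) (Nat.card ι * lam) (Nat.card ι * t) := by
  obtain ⟨hfin, hloop, hv, hout, hin, ht, hlam, hmu⟩ := h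
  refine ⟨inferInstance, fun x => hloop x.1, ?_, fun x => ?_, fun x => ?_, fun x => ?_,
    fun x y _ (hxy : Adj x.1 y.1) => ?_, fun x y _ (hxy : ¬ Adj x.1 y.1) => ?_⟩
  · rw [Nat.card_prod, hv, mul_comm]
  · rw [card_subtype_fst (Adj x.1), hout]
  · rw [card_subtype_fst (Adj · x.1), hin]
  · rw [card_subtype_fst fun b => Adj x.1 b ∧ Adj b x.1, ht]
  · have hne : x.1 ≠ y.1 := fun heq => hloop x.1 (heq.symm ▸ hxy)
    rw [card_subtype_fst fun b => Adj x.1 b ∧ Adj b y.1, hlam _ _ hne hxy]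
  · rw [card_subtype_fst fun b => Adj x.1 b ∧ Adj b y.1]
    obtain heq | hne := eq_or_ne x.1 y.1
    · rw [← heq, ht]
    · rw [hmu _ _ hne hxy]

/-- The pairs `(i, B)` of a point `i` and a block `B ∈ 𝓑 i`, the vertices of Construction II with
`d = 1`. They are antiflags in the usual sense when `i` lies in no block of `𝓑 i`; this is not part
of the definition. -/
abbrev Antiflag {α : Type*} (𝓑 : α → Finset (Finset α)) : Type _ :=
  {x : α × Finset α // x.2 ∈ 𝓑 x.1}

namespace Antiflag

/-- The adjacency relation of the first graph of Construction II with `d = 1`: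
`(i, B) → (j, B')` if and only if `i ∈ B'`. -/
abbrev Adj {α : Type*} {𝓑 : α → Finset (Finset α)} (x y : Antiflag 𝓑) : Prop :=
  x.1.1 ∈ y.1.2

section Counting

variable {α : Type*} {𝓑 : α → Finset (Finset α)}

lemma card_point_mem (𝓑 : α → Finset (Finset α)) (S : Finset α) :
    Nat.card {z : Antiflag 𝓑 // z.1.1 ∈ S} = ∑ i ∈ S, (𝓑 i).card := by
  let e : {z : Antiflag 𝓑 // z.1.1 ∈ S} ≃ S.sigma 𝓑 :=
    { toFun := fun z => ⟨⟨z.1.1.1, z.1.1.2⟩, Finset.mem_sigma.2 ⟨z.2, z.1.2⟩⟩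
      invFun := fun w => ⟨⟨(w.1.1, w.1.2), (Finset.mem_sigma.1 w.2).2⟩, (Finset.mem_sigma.1 w.2).1⟩
      left_inv := fun _ => rfl
      right_inv := fun _ => rfl }
  rw [Nat.card_congr e, Nat.card_eq_finsetCard, Finset.card_sigma]

lemma card_eq_sum [Fintype α] (𝓑 : α → Finset (Finset α)) :
    Nat.card (Antiflag 𝓑) = ∑ i, (𝓑 i).card := by
  rw [← card_point_mem,
    Nat.card_congr (Equiv.subtypeUnivEquiv fun z : Antiflag 𝓑 => Finset.mem_univ z.1.1)]

lemma bijOn_point (hnotMem : ∀ i, ∀ B ∈ 𝓑 i, i ∉ B)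
    (hunique : ∀ i x, x ≠ i → ∃! B, B ∈ 𝓑 i ∧ x ∈ B) (i : α) (S : Set α) :
    Set.BijOn (fun z : Antiflag 𝓑 => z.1.1) {z | i ∈ z.1.2 ∧ z.1.1 ∈ S} (S \ {i}) := by
  have hne {z : Antiflag 𝓑} (hz : i ∈ z.1.2) : z.1.1 ≠ i :=
    fun h => hnotMem _ _ z.2 (h ▸ hz)
  refine ⟨fun z hz => ⟨hz.2, hne hz.1⟩, ?_, fun j hj => ?_⟩
  · rintro ⟨⟨j, B⟩, hB⟩ ⟨hiB, -⟩ ⟨⟨j', B'⟩, hB'⟩ ⟨hiB', -⟩ (rfl : j = j')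
    obtain rfl : B = B' := (hunique j i (hne hiB).symm).unique ⟨hB, hiB⟩ ⟨hB', hiB'⟩
    rfl
  · obtain ⟨B, hB, hiB⟩ := (hunique j i (Ne.symm hj.2)).exists
    exact ⟨⟨(j, B), hB⟩, ⟨hiB, hj.1⟩, rfl⟩

lemma card_mem_block_point_mem [DecidableEq α] (hnotMem : ∀ i, ∀ B ∈ 𝓑 i, i ∉ B)
    (hunique : ∀ i x, x ≠ i → ∃! B, B ∈ 𝓑 i ∧ x ∈ B) (i : α) (S : Finset α) :
    Nat.card {z : Antiflag 𝓑 // i ∈ z.1.2 ∧ z.1.1 ∈ S} = (S.erase i).card := by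
  rw [← Set.ncard_coe_finset, Finset.coe_erase]
  exact Nat.card_congr ((bijOn_point hnotMem hunique i S).equiv _)

lemma card_mem_block [Fintype α] (hnotMem : ∀ i, ∀ B ∈ 𝓑 i, i ∉ B)
    (hunique : ∀ i x, x ≠ i → ∃! B, B ∈ 𝓑 i ∧ x ∈ B) (i : α) :
    Nat.card {z : Antiflag 𝓑 // i ∈ z.1.2} = Fintype.card α - 1 := by
  classical
  simpa [Finset.card_erase_of_mem] using
    card_mem_block_point_mem hnotMem hunique i Finset.univ

end Counting

theorem isDSRG_adj {α : Type} [Fintype α] {𝓑 : α → Finset (Finset α)} {l s : ℕ}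
    (hcard : Fintype.card α = l * s + 1) (hBs : ∀ i, (𝓑 i).card = s)
    (hBl : ∀ i, ∀ B ∈ 𝓑 i, i ∉ B ∧ B.card = l)
    (hunique : ∀ i x, x ≠ i → ∃! B, B ∈ 𝓑 i ∧ x ∈ B) :
    IsDSRG (Adj (𝓑 := 𝓑)) (l * s ^ 2 + s) (l * s) l (l - 1) l := by
  classical
  have hnotMem : ∀ i, ∀ B ∈ 𝓑 i, i ∉ B := fun i B hB => (hBl i B hB).1
  have hblock (x : Antiflag 𝓑) : x.1.2.card = l := (hBl _ _ x.2).2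
  have hpath (x y : Antiflag 𝓑) : Nat.card {z // Adj x z ∧ Adj z y} = (y.1.2.erase x.1.1).card :=
    card_mem_block_point_mem hnotMem hunique x.1.1 y.1.2
  refine ⟨inferInstance, fun x => hnotMem _ _ x.2, ?_, fun x => ?_, fun x => ?_, fun x => ?_,
    fun x y _ hxy => ?_, fun x y _ hxy => ?_⟩
  · rw [card_eq_sum, Finset.sum_const_nat fun i _ => hBs i, Finset.card_univ, hcard]
    ring
  · rw [card_mem_block hnotMem hunique, hcard, Nat.add_sub_cancel]
  · rw [card_point_mem, Finset.sum_const_nat fun i _ => hBs i, hblock]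
  · rw [hpath, Finset.erase_eq_of_notMem (hnotMem _ _ x.2), hblock]
  · rw [hpath, Finset.card_erase_of_mem hxy, hblock]
  · rw [hpath, Finset.erase_eq_of_notMem hxy, hblock]

end Antiflag

/-- **Construction II with `d = 1`, `m`-fold multiple of the first graph.**  Let
`l, s` be positive integers, `P` the finite type `α` with `ls + 1` elements, and
for each `i ∈ P` let `𝓑 i` be a partition of `P \ {i}` into `s` blocks of size
`l`.  The vertices are the pairs `((i, B), c)` with `B ∈ 𝓑 i`, `c ∈ {1, …, m}`,
and `((i,B),c) → ((j,B'),c')` iff `i ∈ B'`.  This directed graph is a DSRG with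
parameters `(m(ls² + s), mls, ml, m(l−1), ml)`. -/
theorem constructionII_d_eq_one_D1_multiple_dsrg
    {α : Type} [Fintype α] [DecidableEq α]
    (l s m : ℕ) (hl : 0 < l) (hs : 0 < s) (hm : 0 < m)
    (hcard : Fintype.card α = l * s + 1)
    (𝓑 : α → Finset (Finset α))
    (hBs : ∀ i : α, (𝓑 i).card = s)
    (hBl : ∀ i : α, ∀ B ∈ 𝓑 i, i ∉ B ∧ B.card = l)
    (hBpart : ∀ i x : α, x ≠ i → ∃! B, B ∈ 𝓑 i ∧ x ∈ B) :
    IsDSRG (V := {x : α × Finset α // x.2 ∈ 𝓑 x.1} × Fin m)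
      (fun x y => x.1.1.1 ∈ y.1.1.2)
      (m * (l * s ^ 2 + s)) (m * (l * s)) (m * l) (m * (l - 1)) (m * l) := by
  simpa using (Antiflag.isDSRG_adj hcard hBs hBl hBpart).multiple (Fin m)
end

section
/- For all positive integers r, a, b with r ≥ 2, there exists a directed strongly regular graph with parameters (v, k, t, λ, μ) = (r(1+ab)²b, r(1+ab)ab, ra²b + a, ra²b + a − ab − 1, ra²b + a). -/
/-!
Take `r` classes, all copies of a set `X` of `n = ab + 1` elements. Around every `c` in `X`, fix a
partition of the other `ab` elements into parts of size `a` with labels `1, …, b`. A vertex is a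
point `p` of one of the classes, an element `c` of `X` and a label `f`. Its block consists of the
part `f` around `p` in the class of `p` and the part `f` around `c` in every other class, so it
avoids `p`. Put `x → y` when the point of `x` lies on the block of `y`.

Walks `x → z → y` are counted by summing, over the points `q` of the block of `y`, the number of
vertices `z` at `q` whose block contains the point of `x`. This number is `n - 1` if `q` is in
another class than `x`, it is `n` if `q` is a different point of the same class, and it is `0` if
`q` is the point of `x`. The last case occurs exactly when `x → y`, so the total is
`(r - 1)a(n - 1) + na`, minus `n` if `x → y`.
-/

open Finset

lemma card_filter_fst_mem_and {α β : Type*} [Fintype α] [DecidableEq α] [Fintype β]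
    (s : Finset α) (p : α → β → Prop) [∀ x, DecidablePred (p x)] :
    #{z : α × β | z.1 ∈ s ∧ p z.1 z.2} = ∑ x ∈ s, #{w | p x w} := by
  simp only [card_filter, Fintype.sum_prod_type, ite_and, sum_ite_irrel, sum_const_zero,
    Fintype.sum_ite_mem]

/-- For every point `c`, a partition of the points other than `c` into parts of size `a` indexed
by `F`. The partitions for different `c` need not be related. -/
structure PuncturedPartition (X F : Type*) (a : ℕ) where
  part : X → F → Finset X
  notMem_part_self (c : X) (f : F) : c ∉ part c f
  existsUnique_mem_part {c x : X} (h : x ≠ c) : ∃! f, x ∈ part c f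
  card_part (c : X) (f : F) : #(part c f) = a

namespace PuncturedPartition

variable {I X F : Type*} {a : ℕ}

/-- The transposition of `c` and `none` carries the obvious partition of the elements
`some (f, k)` of `Option (F × A)` according to `f` to a partition of the elements other
than `c`. -/
def ofSwapNone (F A : Type*) [DecidableEq F] [Fintype A] [DecidableEq A] :
    PuncturedPartition (Option (F × A)) F (Fintype.card A) where
  part c f := univ.map ⟨fun k : A ↦ Equiv.swap c none (some (f, k)),
    (Equiv.injective _).comp fun _ _ ↦ by simp⟩
  notMem_part_self c f := by simp [Equiv.swap_apply_eq_iff]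
  existsUnique_mem_part {c x} h := by
    obtain ⟨⟨f, k⟩, hfk⟩ : ∃ z, some z = Equiv.swap c none x := by
      rw [← Option.ne_none_iff_exists, Ne, Equiv.swap_apply_eq_iff]
      simpa using h
    simp [Equiv.swap_apply_eq_iff, ← hfk]
  card_part c f := by simp

lemma card_filter_mem_part [DecidableEq X] [Fintype F] (L : PuncturedPartition X F a) (c x : X) :
    #{f | x ∈ L.part c f} = if x = c then 0 else 1 := by
  split_ifs with h
  · simp [h, L.notMem_part_self]
  · rw [← Fintype.existsUnique_iff_card_one]
    exact L.existsUnique_mem_part h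

lemma card_eq_mul_add_one [Fintype X] [Fintype F] (L : PuncturedPartition X F a) (c : X) :
    Fintype.card X = Fintype.card F * a + 1 := by
  classical
  have card_ne : #(univ.erase c) = Fintype.card F * a := by
    simpa [bipartiteAbove, bipartiteBelow, card_filter_mem_part, card_part, sum_ite, filter_ne']
      using sum_card_bipartiteAbove_eq_sum_card_bipartiteBelow
        (s := univ) (t := univ) fun x f ↦ x ∈ L.part c f
  rw [← card_ne, card_erase_add_one (mem_univ c), card_univ]

/-- The vertices of the graph. Points are the elements of `I × X`, and `I` indexes the classes of
points; the vertex `((i, g), (e, f))` is the point `(i, g)` together with a block avoiding it, which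
is described by the common center `e` for the classes other than `i` and the label `f`. -/
abbrev Vertex (I X F : Type*) : Type _ := (I × X) × X × F

variable [DecidableEq I]

/-- The point of the class `i` around which the block of `y` is taken: it is the point of `y`
itself in the class of `y`, and the common center of `y` in all other classes. -/
def center (y : Vertex I X F) (i : I) : X :=
  if i = y.1.1 then y.1.2 else y.2.1

variable [Fintype I] [Fintype X] [DecidableEq X]

/-- The block of the vertex `y`, as a set of points: in every class, it is the part around the
center of `y` that carries the label of `y`. -/
def block (L : PuncturedPartition X F a) (y : Vertex I X F) : Finset (I × X) :=
  {q | q.2 ∈ L.part (center y q.1) y.2.2}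

/-- The directed graph on `Vertex I X F` with `x → y` when the point of `x` lies on the block
of `y`. -/
abbrev Adj (L : PuncturedPartition X F a) (x y : Vertex I X F) : Prop :=
  x.1 ∈ L.block y

variable (L : PuncturedPartition X F a)

lemma mem_block {q : I × X} {y : Vertex I X F} :
    q ∈ L.block y ↔ q.2 ∈ L.part (center y q.1) y.2.2 := by
  simp [block]

lemma not_adj_self (x : Vertex I X F) : ¬ L.Adj x x := by
  simp [mem_block, center, L.notMem_part_self]

lemma sum_block {M : Type*} [AddCommMonoid M] (y : Vertex I X F) (g : I × X → M) :
    ∑ q ∈ L.block y, g q = ∑ i, ∑ h ∈ L.part (center y i) y.2.2, g (i, h) :=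
  sum_finset_product _ univ _ fun q ↦ by simp [mem_block]

lemma card_block (y : Vertex I X F) : #(L.block y) = Fintype.card I * a := by
  rw [card_eq_sum_ones, sum_block]
  simp [L.card_part]

variable [Fintype F]

lemma card_blocks_of_same_class (i : I) (g h : X) :
    #{w : X × F | (i, g) ∈ L.block ((i, h), w)} = if g = h then 0 else Fintype.card X := by
  simpa [mem_block, center, card_filter_mem_part] using
    card_filter_fst_mem_and (univ : Finset X) fun _ f ↦ g ∈ L.part h f

lemma card_blocks_of_ne_class {p q : I × X} (hpq : p.1 ≠ q.1) :
    #{w : X × F | p ∈ L.block (q, w)} = Fintype.card X - 1 := by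
  simpa [mem_block, center, hpq, card_filter_mem_part, sum_ite, filter_ne] using
    card_filter_fst_mem_and (univ : Finset X) fun e f ↦ p.2 ∈ L.part e f

lemma card_inNeighbors (y : Vertex I X F) :
    #{x | L.Adj x y} = Fintype.card I * a * (Fintype.card X * Fintype.card F) := by
  simpa [card_block] using card_filter_fst_mem_and (L.block y) fun _ (_ : X × F) ↦ True

lemma card_outNeighbors (x : Vertex I X F) :
    #{y | L.Adj x y} = Fintype.card I * Fintype.card X * (Fintype.card X - 1) := by
  have sum_class (i : I) : ∑ h, #{w | x.1 ∈ L.block ((i, h), w)} =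
      Fintype.card X * (Fintype.card X - 1) := by
    rcases eq_or_ne x.1.1 i with rfl | hi
    · simp [card_blocks_of_same_class, sum_ite, filter_ne, mul_comm]
    · simp [card_blocks_of_ne_class, hi]
  calc #{y | L.Adj x y} = ∑ i, ∑ h, #{w | x.1 ∈ L.block ((i, h), w)} := by
        rw [← Fintype.sum_prod_type']
        simpa using card_filter_fst_mem_and univ fun q w ↦ x.1 ∈ L.block (q, w)
    _ = Fintype.card I * Fintype.card X * (Fintype.card X - 1) := by simp [sum_class, mul_assoc]

lemma card_walks (x y : Vertex I X F) :
    #{z | L.Adj x z ∧ L.Adj z y} =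
      Fintype.card X * (if L.Adj x y then a - 1 else a) +
        (Fintype.card I - 1) * (a * (Fintype.card X - 1)) := by
  have sum_same_class (c : X) (f : F) :
      ∑ h ∈ L.part c f, #{w | x.1 ∈ L.block ((x.1.1, h), w)} =
        Fintype.card X * (if x.1.2 ∈ L.part c f then a - 1 else a) := by
    simp [card_blocks_of_same_class, sum_ite, filter_ne, card_erase_eq_ite, L.card_part, mul_comm]
  have sum_other_class {i : I} (hi : i ∈ univ.erase x.1.1) (c : X) (f : F) :
      ∑ h ∈ L.part c f, #{w | x.1 ∈ L.block ((i, h), w)} = a * (Fintype.card X - 1) := by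
    simp [card_blocks_of_ne_class, (ne_of_mem_erase hi).symm, L.card_part]
  calc #{z | L.Adj x z ∧ L.Adj z y}
      = ∑ q ∈ L.block y, #{w | x.1 ∈ L.block (q, w)} := by
        simpa only [and_comm] using
          card_filter_fst_mem_and (L.block y) fun q w ↦ x.1 ∈ L.block (q, w)
    _ = ∑ i, ∑ h ∈ L.part (center y i) y.2.2, #{w | x.1 ∈ L.block ((i, h), w)} :=
        L.sum_block y _
    _ = Fintype.card X * (if L.Adj x y then a - 1 else a) +
          (Fintype.card I - 1) * (a * (Fintype.card X - 1)) := by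
        rw [← add_sum_erase _ _ (mem_univ x.1.1), sum_same_class,
          sum_congr rfl fun i hi ↦ sum_other_class hi _ _]
        simp [mem_block]

theorem isDSRG_adj {I X F : Type} [Fintype I] [DecidableEq I] [Fintype X] [DecidableEq X]
    [Fintype F] (L : PuncturedPartition X F a) :
    IsDSRG (L.Adj (I := I))
      (Fintype.card I * Fintype.card X * (Fintype.card X * Fintype.card F))
      (Fintype.card I * Fintype.card X * (Fintype.card X - 1))
      (Fintype.card X * a + (Fintype.card I - 1) * (a * (Fintype.card X - 1)))
      (Fintype.card X * (a - 1) + (Fintype.card I - 1) * (a * (Fintype.card X - 1)))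
      (Fintype.card X * a + (Fintype.card I - 1) * (a * (Fintype.card X - 1))) := by
  simp only [IsDSRG, Nat.card_eq_fintype_card, Fintype.card_subtype]
  refine ⟨inferInstance, L.not_adj_self, by simp, L.card_outNeighbors, fun y ↦ ?_, fun x ↦ ?_,
    fun x y _ hxy ↦ ?_, fun x y _ hxy ↦ ?_⟩
  · rw [card_inNeighbors, L.card_eq_mul_add_one y.1.2, Nat.add_sub_cancel]
    ring
  · rw [card_walks, if_neg (L.not_adj_self x)]
  · rw [card_walks, if_pos hxy]
  · rw [card_walks, if_neg hxy]

end PuncturedPartition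

theorem exists_dsrg_family_one_general
    (r a b : ℕ) (ha : 0 < a) (hr : 0 < r) :
    ∃ (V : Type) (Adj : V → V → Prop),
      IsDSRG Adj
        (r * (1 + a * b) ^ 2 * b)
        (r * (1 + a * b) * a * b)
        (r * a ^ 2 * b + a)
        (r * a ^ 2 * b + a - a * b - 1)
        (r * a ^ 2 * b + a) := by
  obtain ⟨s, rfl⟩ := Nat.exists_eq_add_one.2 hr
  obtain ⟨c, rfl⟩ := Nat.exists_eq_add_one.2 ha
  have lam_eq : (s + 1) * (c + 1) ^ 2 * b + (c + 1) - (c + 1) * b - 1 =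
      (b * (c + 1) + 1) * c + s * ((c + 1) * (b * (c + 1))) := by
    rw [Nat.sub_sub]
    exact Nat.sub_eq_of_eq_add (by ring)
  let L := PuncturedPartition.ofSwapNone (Fin b) (Fin (c + 1))
  refine ⟨_, L.Adj (I := Fin (s + 1)), ?_⟩
  convert L.isDSRG_adj (I := Fin (s + 1)) using 1 <;>
    simp only [lam_eq, Fintype.card_fin, Fintype.card_option, Fintype.card_prod,
      Nat.add_sub_cancel] <;>
    ring

/-- For all positive integers `r, a, b` with `r ≥ 2`, there exists a directed
strongly regular graph with parameters
`(r(1+ab)²b, r(1+ab)ab, ra²b + a, ra²b + a − ab − 1, ra²b + a)`. -/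
theorem exists_dsrg_family_one
    (r a b : ℕ) (ha : 0 < a) (hb : 0 < b) (hr : 2 ≤ r) :
    ∃ (V : Type) (Adj : V → V → Prop),
      IsDSRG Adj
        (r * (1 + a * b) ^ 2 * b)
        (r * (1 + a * b) * a * b)
        (r * a ^ 2 * b + a)
        (r * a ^ 2 * b + a - a * b - 1)
        (r * a ^ 2 * b + a) :=
  exists_dsrg_family_one_general r a b ha (by lia)
end

section
/- For all positive integers d, l, s such that d divides ls and 1 ≤ l < ls/d, there exists a directed strongly regular graph with parameters (v, k, t, λ, μ) = ((1 + ls/d)s, ls, ld, ld − d, ld). -/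
/-!
Let `P` be a finite point set. For every point `y` choose a 1-design with blocks `B y b`, `b : ι`,
on the points other than `y`, with parameters `l`, `d` independent of `y`. Put an arrow
`(x, a) → (y, b)` on `P × ι` whenever `x ∈ B y b`. The in-neighbours of `(y, b)` are then the pairs
whose point lies in `B y b`, so an arrow `z → (y, b)` constrains only the point of `z`, and every
count in the definition of a directed strongly regular graph, except that of the in-neighbours,
amounts to counting the out-neighbours of `(x, a)` whose point lies in a given set `T`. Each
point of `T` other than `x` contributes `d` of them, and `x` itself contributes none; hence for
`T = B y b` there are `l * d` or `l * d - d` according to whether `x ∉ B y b` or `x ∈ B y b`.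

The designs are obtained by dealing the points cyclically, `l` at a time, into the blocks.
-/

section OneDesign

open Finset Function

/-- `B` is the block family of a 1-design (or tactical configuration): every block has `l` points
and every point lies in `d` blocks. Blocks are indexed by `ι`, so that repeated blocks are allowed
and counted with multiplicity. -/
structure IsOneDesign {P ι : Type*} [Fintype ι] [DecidableEq P] (B : ι → Finset P) (l d : ℕ) :
    Prop where
  card_block (b : ι) : #(B b) = l
  card_blocks_mem (x : P) : #{b | x ∈ B b} = d

variable {P ι : Type*} [Fintype ι] [DecidableEq P]

theorem IsOneDesign.card_points_mul [Fintype P] {B : ι → Finset P} {l d : ℕ}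
    (hB : IsOneDesign B l d) :
    Fintype.card P * d = Fintype.card ι * l :=
  card_mul_eq_card_mul (fun x b ↦ x ∈ B b) (fun x _ ↦ hB.card_blocks_mem x)
    (fun b _ ↦ by simpa [bipartiteBelow] using hB.card_block b)

-- `ι × L` are the slots of the blocks, `D × P` is one copy of each point for every element of `D`,
-- and `e` puts exactly one copy of a point into each slot.
theorem isOneDesign_image_of_equiv {L D : Type*} [Fintype L] [Fintype D] (e : ι × L ≃ D × P)
    (he : ∀ b, Injective fun i ↦ (e (b, i)).2) :
    IsOneDesign (fun b ↦ univ.image fun i ↦ (e (b, i)).2) (Fintype.card L) (Fintype.card D) := by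
  classical
  refine ⟨fun b ↦ card_image_of_injective _ (he b), fun x ↦ ?_⟩
  have blocks_eq : ({b | x ∈ univ.image fun i ↦ (e (b, i)).2} : Finset ι) =
      univ.image fun c ↦ (e.symm (c, x)).1 := by
    ext b
    simp only [mem_filter_univ, mem_image, mem_univ, true_and]
    constructor
    · rintro ⟨i, rfl⟩
      exact ⟨(e (b, i)).1, by simp⟩
    · rintro ⟨c, rfl⟩
      exact ⟨(e.symm (c, x)).2, by simp⟩
  have index_injective : Injective fun c ↦ (e.symm (c, x)).1 := by
    intro c c' (hcc : (e.symm (c, x)).1 = (e.symm (c', x)).1)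
    have slot_eq : (e.symm (c, x)).2 = (e.symm (c', x)).2 := by
      refine he (e.symm (c, x)).1 ?_
      dsimp only
      nth_rw 2 [hcc]
      simp only [Prod.mk.eta, Equiv.apply_symm_apply]
    exact congrArg Prod.fst (e.symm.injective (Prod.ext hcc slot_eq))
  rw [blocks_eq, card_image_of_injective _ index_injective, card_univ]

theorem exists_finProd_equiv_injective_snd {s l d m : ℕ} (hlm : l ≤ m) (h : s * l = d * m) :
    ∃ e : Fin s × Fin l ≃ Fin d × Fin m, ∀ b, Injective fun i ↦ (e (b, i)).2 := by
  -- Slot `i` of block `b` has number `i + l * b` and receives the point with that residue mod `m`.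
  refine ⟨finProdFinEquiv.trans ((finCongr h).trans finProdFinEquiv.symm), fun b i j hij ↦ ?_⟩
  have add_modEq : (i + l * b : ℕ) ≡ j + l * b [MOD m] := congrArg Fin.val hij
  exact Fin.ext <| add_modEq.add_right_cancel'.eq_of_lt_of_lt
    (i.isLt.trans_le hlm) (j.isLt.trans_le hlm)

theorem exists_isOneDesign [Fintype P] {l d : ℕ} (hl : l ≤ Fintype.card P)
    (h : Fintype.card ι * l = d * Fintype.card P) :
    ∃ B : ι → Finset P, IsOneDesign B l d := by
  obtain ⟨e, he⟩ := exists_finProd_equiv_injective_snd hl h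
  let f : ι × Fin l ≃ Fin d × P :=
    ((Fintype.equivFin ι).prodCongr (.refl _)).trans
      (e.trans ((Equiv.refl _).prodCongr (Fintype.equivFin P).symm))
  have hf (b : ι) : Injective fun i ↦ (f (b, i)).2 :=
    (Fintype.equivFin P).symm.injective.comp (he (Fintype.equivFin ι b))
  have design := isOneDesign_image_of_equiv f hf
  rw [Fintype.card_fin, Fintype.card_fin] at design
  exact ⟨_, design⟩

end OneDesign

section Antiflag

open Finset Function

variable {P ι : Type*} {B : ∀ y : P, ι → Finset {x // x ≠ y}}

/-- The block of `P` belonging to the antiflag `q = (y, b)`. Blocks indexed by `y` are given as sets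
of points of the subtype `{x // x ≠ y}`, which encodes that they avoid `y`. -/
def antiflagBlock (B : ∀ y : P, ι → Finset {x // x ≠ y}) (q : P × ι) : Finset P :=
  (B q.1 q.2).map (Embedding.subtype _)

/-- Adjacency of the antiflag graph on `P × ι`: there is an arrow `(x, a) → (y, b)` when `x` lies in
the block belonging to `(y, b)`. -/
def AntiflagAdj (B : ∀ y : P, ι → Finset {x // x ≠ y}) (p q : P × ι) : Prop :=
  p.1 ∈ antiflagBlock B q

theorem notMem_antiflagBlock_self (B : ∀ y : P, ι → Finset {x // x ≠ y}) (q : P × ι) :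
    q.1 ∉ antiflagBlock B q := by
  simp [antiflagBlock]

theorem mem_antiflagBlock_of_ne {x y : P} (hxy : x ≠ y) (b : ι) :
    x ∈ antiflagBlock B (y, b) ↔ ⟨x, hxy⟩ ∈ B y b := by
  simp [antiflagBlock, hxy]

variable [Fintype ι] [DecidableEq P] {l d : ℕ}

theorem card_antiflagBlock (hB : ∀ y, IsOneDesign (B y) l d) (q : P × ι) :
    #(antiflagBlock B q) = l := by
  rw [antiflagBlock, card_map, (hB q.1).card_block]

theorem card_outNeighbors_antiflagAdj_fst_mem (hB : ∀ y, IsOneDesign (B y) l d) (p : P × ι)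
    (T : Finset P) :
    Nat.card {z // AntiflagAdj B p z ∧ z.1 ∈ T} = #(T.erase p.1) * d := by
  have card_fiber (y : P) (hy : y ∈ T.erase p.1) : #{b | p.1 ∈ antiflagBlock B (y, b)} = d := by
    have hpy : p.1 ≠ y := (ne_of_mem_erase hy).symm
    simp only [mem_antiflagBlock_of_ne hpy, (hB y).card_blocks_mem ⟨p.1, hpy⟩]
  have mem_arrows (z : P × ι) :
      z ∈ (T.erase p.1 ×ˢ univ).filter (p.1 ∈ antiflagBlock B ·) ↔
        AntiflagAdj B p z ∧ z.1 ∈ T := by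
    have fst_ne (hpz : p.1 ∈ antiflagBlock B z) : z.1 ≠ p.1 := fun h ↦
      notMem_antiflagBlock_self B z (h ▸ hpz)
    simp only [mem_filter, mem_product, mem_erase, mem_univ, and_true, AntiflagAdj]
    tauto
  calc Nat.card {z // AntiflagAdj B p z ∧ z.1 ∈ T}
      = #((T.erase p.1 ×ˢ univ).filter (p.1 ∈ antiflagBlock B ·)) := Nat.subtype_card _ mem_arrows
    _ = ∑ y ∈ T.erase p.1, #{b | p.1 ∈ antiflagBlock B (y, b)} := by
        simp only [card_filter, sum_product]
    _ = #(T.erase p.1) * d := sum_const_nat card_fiber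

theorem card_outNeighbors_antiflagAdj [Finite P] (hB : ∀ y, IsOneDesign (B y) l d) (p : P × ι) :
    Nat.card {q // AntiflagAdj B p q} = l * Fintype.card ι := by
  cases nonempty_fintype P
  have card_ne : Fintype.card {x // x ≠ p.1} = Fintype.card P - 1 := by simp
  have h := card_outNeighbors_antiflagAdj_fst_mem hB p univ
  simp only [mem_univ, and_true] at h
  rw [h, card_erase_of_mem (mem_univ _), card_univ, ← card_ne, (hB p.1).card_points_mul, mul_comm]

theorem card_inNeighbors_antiflagAdj (hB : ∀ y, IsOneDesign (B y) l d) (q : P × ι) :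
    Nat.card {p // AntiflagAdj B p q} = l * Fintype.card ι := by
  rw [Nat.subtype_card (antiflagBlock B q ×ˢ univ) (by simp [AntiflagAdj]), card_product,
    card_antiflagBlock hB, card_univ]

theorem card_twoPaths_antiflagAdj_of_adj (hB : ∀ y, IsOneDesign (B y) l d) {p q : P × ι}
    (hpq : AntiflagAdj B p q) :
    Nat.card {z // AntiflagAdj B p z ∧ AntiflagAdj B z q} = l * d - d := by
  rw [← Nat.sub_one_mul, ← card_antiflagBlock hB q, ← card_erase_of_mem hpq]
  exact card_outNeighbors_antiflagAdj_fst_mem hB p _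

theorem card_twoPaths_antiflagAdj_of_not_adj (hB : ∀ y, IsOneDesign (B y) l d) {p q : P × ι}
    (hpq : ¬ AntiflagAdj B p q) :
    Nat.card {z // AntiflagAdj B p z ∧ AntiflagAdj B z q} = l * d := by
  rw [← card_antiflagBlock hB q, ← erase_eq_of_notMem hpq]
  exact card_outNeighbors_antiflagAdj_fst_mem hB p _

theorem isDSRG_antiflagAdj {P ι : Type} [Fintype P] [Fintype ι] [DecidableEq P]
    {B : ∀ y : P, ι → Finset {x // x ≠ y}} {l d : ℕ} (hB : ∀ y, IsOneDesign (B y) l d) :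
    IsDSRG (AntiflagAdj B) (Fintype.card P * Fintype.card ι) (l * Fintype.card ι) (l * d)
      (l * d - d) (l * d) := by
  have irrefl := notMem_antiflagBlock_self B
  exact ⟨inferInstance, irrefl, by simp,
    card_outNeighbors_antiflagAdj hB, card_inNeighbors_antiflagAdj hB,
    fun p ↦ card_twoPaths_antiflagAdj_of_not_adj hB (irrefl p),
    fun _ _ _ ↦ card_twoPaths_antiflagAdj_of_adj hB,
    fun _ _ _ ↦ card_twoPaths_antiflagAdj_of_not_adj hB⟩

end Antiflag

/-- For all positive integers `d, l, s` such that `d` divides `ls` and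
`1 ≤ l < ls/d`, there exists a directed strongly regular graph with parameters
`((1 + ls/d)s, ls, ld, ld − d, ld)`. -/
theorem exists_dsrg_family_two
    (d l s : ℕ) (hd : 0 < d) (hl : 0 < l) (hs : 0 < s)
    (hdvd : d ∣ l * s) (hlt : l < l * s / d) :
    ∃ (V : Type) (Adj : V → V → Prop),
      IsDSRG Adj
        ((1 + l * s / d) * s) (l * s) (l * d) (l * d - d) (l * d) := by
  obtain ⟨m, hm⟩ := hdvd
  have hdiv : l * s / d = m := by rw [hm, Nat.mul_div_cancel_left _ hd]
  rw [hdiv] at hlt ⊢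
  have card_ne (y : Fin (1 + m)) : Fintype.card {x // x ≠ y} = m := by simp
  have exists_design (y : Fin (1 + m)) :
      ∃ B : Fin s → Finset {x // x ≠ y}, IsOneDesign B l d := by
    apply exists_isOneDesign
    · rw [card_ne]
      exact hlt.le
    · rw [card_ne, Fintype.card_fin, mul_comm, hm]
  choose B hB using exists_design
  have key := isDSRG_antiflagAdj hB
  rw [Fintype.card_fin, Fintype.card_fin] at key
  exact ⟨_, _, key⟩
end
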